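/- arXiv:1912.03898 — 4 statements merged into one kernel-verified Lean document; each statement's English description precedes it below -/
import Mathlib

section
/- Let k be a field and let I be a monomial ideal in k[x_0, x_1, …, x_m] such that every monomial in a generating set of I has degree at most 1 in the variable x_0. If f is a polynomial such that (x_0 − x_1)·f ∈ I, then for every monomial m appearing with nonzero coefficient in f, both x_0·m and x_1·m lie in I. -/
open MvPolynomial

/-!
Let `M` be the set of exponents of monomials of `I`: those `e` with `g ≤ e` for some `g ∈ G`.
Membership in a monomial ideal is tested on exponents, so for `e ∉ M` the coefficients of `e` in
`x_0 f` and `x_1 f` agree. Hence if `d` is in the support of `f` and `d + e_i ∉ M`, then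
`d + e_i = d' + e_j` for some `d'` in the support, where `{i, j} = {0, 1}` (`exists_exchange`).

For `x_0`, induct on the exponent of `x_1`: if `d + e_0 ∉ M`, the exchanged `d' = d + e_0 - e_1` has
`d' + e_0 ∈ M` by induction. As `d'` already involves `x_0` and generators have degree at most one
in `x_0`, even `d' ∈ M`, so `d + e_0 = d' + e_1 ∈ M`, a contradiction. For `x_1`, if `d + e_1 ∉ M`
then `d + e_1 = d' + e_0` with `d'` in the support, contradicting the case of `x_0`.
-/

/-- If `x_i f` and `x_j f` have the same coefficient at `d + e_i`, where `d` is in the support of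
`f`, then this monomial of `x_i f` also occurs in `x_j f`. -/
lemma exists_exchange {σ k : Type*} [Field k] {f : MvPolynomial σ k} {i j : σ} {d : σ →₀ ℕ}
    (hd : d ∈ f.support)
    (h : coeff (d + Finsupp.single i 1) (X i * f) = coeff (d + Finsupp.single i 1) (X j * f)) :
    ∃ d' ∈ f.support, d + Finsupp.single i 1 = d' + Finsupp.single j 1 := by
  classical
  rw [add_comm d, coeff_X_mul, coeff_X_mul'] at h
  rw [mem_support_iff] at hd
  split_ifs at h with hj
  · refine ⟨_, mem_support_iff.2 (h ▸ hd), ?_⟩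
    rw [add_comm d, tsub_add_cancel_of_le]
    rw [Finsupp.single_le_iff]
    exact Nat.one_le_iff_ne_zero.2 (Finsupp.mem_support_iff.1 hj)
  · exact absurd h hd

/-- Let `I` be a monomial ideal in `k[x_0, …, x_m]` (monomially generated by
the set of exponent vectors `G`) such that every generator has degree at most `1` in `x_0`.
If `(x_0 - x_1) * f ∈ I`, then for every monomial `m` appearing in `f`, both `x_0 * m` and
`x_1 * m` lie in `I`. -/
theorem stmt_0 {k : Type*} [Field k] {m : ℕ} (hm : 0 < m)
    (I : Ideal (MvPolynomial (Fin (m + 1)) k))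
    (G : Set (Fin (m + 1) →₀ ℕ))
    (hG : ∀ d ∈ G, d 0 ≤ 1)
    (hI : I = Ideal.span ((fun d => monomial d (1 : k)) '' G))
    (f : MvPolynomial (Fin (m + 1)) k)
    (hf : (X 0 - X 1) * f ∈ I) :
    ∀ d ∈ f.support, X 0 * monomial d (1 : k) ∈ I ∧ X 1 * monomial d (1 : k) ∈ I := by
  classical
  have h01 : (0 : Fin (m + 1)) ≠ 1 := by
    obtain ⟨n, rfl⟩ := Nat.exists_eq_succ_of_ne_zero hm.ne'
    exact Fin.zero_ne_one
  subst hI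
  rw [mem_ideal_span_monomial_image] at hf
  have hcoeff : ∀ e, (¬ ∃ g ∈ G, g ≤ e) → coeff e (X 0 * f) = coeff e (X 1 * f) := by
    intro e he
    by_contra hne
    refine he (hf e ?_)
    rwa [mem_support_iff, sub_mul, coeff_sub, sub_ne_zero]
  have hX0 : ∀ n, ∀ d ∈ f.support, d 1 = n → ∃ g ∈ G, g ≤ d + Finsupp.single 0 1 := by
    intro n
    induction n with
    | zero =>
      intro d hd hn
      by_contra hM
      obtain ⟨d', -, heq⟩ := exists_exchange hd (hcoeff _ hM)
      have := DFunLike.congr_fun heq 1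
      simp [h01, hn] at this
    | succ n ih =>
      intro d hd hn
      by_contra hM
      obtain ⟨d', hd', heq⟩ := exists_exchange hd (hcoeff _ hM)
      have h1 := DFunLike.congr_fun heq 1
      have h0 := DFunLike.congr_fun heq 0
      simp [h01, hn] at h1
      simp [h01.symm] at h0
      obtain ⟨g, hg, hle⟩ := ih d' hd' h1.symm
      refine hM ⟨g, hg, heq ▸ le_add_right ?_⟩
      -- `g ≤ d' + e_0` gives `g ≤ d'`, because `g 0 ≤ 1 ≤ d' 0`.
      intro i
      by_cases hi : i = 0
      · subst hi
        have := hG g hg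
        omega
      · simpa [Ne.symm hi, hi] using hle i
  have hmem : ∀ i d, (∃ g ∈ G, g ≤ d + Finsupp.single i 1) →
      X i * monomial d (1 : k) ∈ Ideal.span ((fun d => monomial d (1 : k)) '' G) := by
    intro i d h
    rw [mem_ideal_span_monomial_image, X, monomial_mul, add_comm _ d]
    intro e he
    rwa [Finset.mem_singleton.1 (support_monomial_subset he)]
  intro d hd
  refine ⟨hmem _ _ (hX0 _ d hd rfl), hmem _ _ ?_⟩
  by_contra hM
  obtain ⟨d', hd', heq⟩ := exists_exchange hd (hcoeff _ hM).symm
  exact hM (heq ▸ hX0 _ d' hd' rfl)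
end

section
/- Let J be a polarization of a monomial ideal I, let x^a and x^b be minimal generators of I with corresponding generators m(a) = m_1(a)⋯m_m(a) and m(b) = m_1(b)⋯m_m(b) of J, and fix an index i. If a_i ≤ b_i and a_j ≥ b_j for every j ≠ i, then the i-th part m_i(a) divides m_i(b). -/
/-!
Write `S` for the big polynomial ring, `L ⊆ S` for the ideal generated by the variable differences
and `π : x_{jp} ↦ x_j`. Everything is graded by the multidegree, the exponent vector of the image
under `π`. The heart of the matter is that regularity forces `J ∩ L = J L`
(`IsRegSeq.inf_span_le`, a form of the vanishing of `Tor₁(S/J, S/L)`), while `L` contains the kernel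
of `π` (`monomial_sub_mem_span_diffList`).

Let `ρ` identify all variables inside each row `j ≠ i` and keep row `i` untouched
(`rename (collapse i)`). The claim proved by induction on `n` is: for every monomial `x^d ∈ J` of
multidegree `c`, where `c_i = n` and `c_j = a_j` for `j ≠ i`, the image `ρ(x^d)` is divisible by
`m_i(a)` (`rowPart_le_of_mem`). Minimality of `x^a` gives `n ≥ a_i`, so there is a monomial `u` with
`m(a) u` of multidegree `c`. Then `x^d - m(a) u` lies in `J ∩ L = J L`, so it is a combination of
terms `x^e (x_{jp} - x_{j,p+1})` of multidegree `c` with `x^e ∈ J`. For `j ≠ i` such a term is killed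
by `ρ`; for `j = i` the monomial `x^e` has `i`-th degree `n - 1` and the induction hypothesis
applies.

The theorem follows by applying the claim to `m(b) v`, where `v` is a monomial without variables from
row `i` which raises the multidegree of `m(b)` to `a_j` in every row `j ≠ i`.
-/

open MvPolynomial

noncomputable section

/-- A list of elements is a regular sequence on `A ⧸ J`. -/
def IsRegSeq {A : Type*} [CommRing A] : List A → Ideal A → Prop
  | [], _ => True
  | a :: l, J => (∀ f, a * f ∈ J → f ∈ J) ∧ IsRegSeq l (J ⊔ Ideal.span {a})

/-- The list of variable differences `x_{i,j} - x_{i,j+1}` for `1 ≤ i ≤ m`,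
`1 ≤ j ≤ n_i - 1`. -/
def diffList (k : Type*) [Field k] (m : ℕ) (nv : Fin m → ℕ) :
    List (MvPolynomial (Σ i : Fin m, Fin (nv i)) k) :=
  (List.finRange m).flatMap fun i =>
    (List.finRange (nv i - 1)).map fun j =>
      MvPolynomial.X ⟨i, ⟨j.1, by have := j.isLt; omega⟩⟩ -
        MvPolynomial.X ⟨i, ⟨j.1 + 1, by have := j.isLt; omega⟩⟩

/-- `J ⊆ k[X̌_1, …, X̌_m]` is a polarization of the monomial ideal `I ⊆ k[x_1, …, x_m]`:
`J` is a squarefree monomial ideal, the map `π : x_{ij} ↦ x_i` carries `J` onto `I`, and the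
variable differences `x_{i,j} - x_{i,j+1}` form a regular sequence on the quotient by `J`. -/
def IsPolarization {k : Type*} [Field k] {m : ℕ} {nv : Fin m → ℕ}
    (J : Ideal (MvPolynomial (Σ i : Fin m, Fin (nv i)) k))
    (I : Ideal (MvPolynomial (Fin m) k)) : Prop :=
  (∃ G : Set ((Σ i : Fin m, Fin (nv i)) →₀ ℕ),
    (∀ d ∈ G, ∀ x, d x ≤ 1) ∧
    J = Ideal.span ((fun d => monomial d (1 : k)) '' G)) ∧
  Ideal.map
    (rename Sigma.fst : MvPolynomial (Σ i : Fin m, Fin (nv i)) k →ₐ[k] MvPolynomial (Fin m) k)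
    J = I ∧
  IsRegSeq (diffList k m nv) J

/-- The monomial `x^d` is a minimal generator of the monomial ideal `I`. -/
def IsMinGen {k : Type*} [Field k] {σ : Type*} (I : Ideal (MvPolynomial σ k))
    (d : σ →₀ ℕ) : Prop :=
  monomial d (1 : k) ∈ I ∧ ∀ d' : σ →₀ ℕ, d' ≤ d → d' ≠ d → monomial d' (1 : k) ∉ I

/-- For a regular sequence `l` on `A ⧸ J` one has `J ∩ (l) ⊆ J (l)`. -/
theorem IsRegSeq.inf_span_le {A : Type*} [CommRing A] (l : List A) :
    ∀ J : Ideal A, IsRegSeq l J →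
      J ⊓ Ideal.span {x | x ∈ l} ≤ J * Ideal.span {x | x ∈ l} := by
  induction l with
  | nil =>
    intro J _ f hf
    have h0 : f ∈ Ideal.span {x : A | x ∈ ([] : List A)} := hf.2
    have : f = 0 := by simpa using h0
    rw [this]
    exact Ideal.zero_mem _
  | cons t l ih =>
    rintro J ⟨ht, hl⟩ f ⟨hfJ, hfL⟩
    have hset : Ideal.span {x | x ∈ t :: l} = Ideal.span {t} ⊔ Ideal.span {x | x ∈ l} := by
      rw [← Ideal.span_union]
      congr 1
      ext x
      simp
    rw [hset] at hfL ⊢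
    obtain ⟨y, hy, h, hh, rfl⟩ := Submodule.mem_sup.1 hfL
    obtain ⟨g, rfl⟩ := Ideal.mem_span_singleton.1 hy
    have h1 : h ∈ (J ⊔ Ideal.span {t}) * Ideal.span {x | x ∈ l} := by
      refine ih _ hl ⟨?_, hh⟩
      have : h = (t * g + h) - t * g := by ring
      rw [this]
      exact sub_mem (Ideal.mem_sup_left hfJ)
        (Ideal.mem_sup_right (Ideal.mem_span_singleton.2 ⟨g, rfl⟩))
    rw [Ideal.sup_mul] at h1
    obtain ⟨q, hq, z, hz, rfl⟩ := Submodule.mem_sup.1 h1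
    obtain ⟨h', _, rfl⟩ := Ideal.mem_span_singleton_mul.1 hz
    have h2 : g + h' ∈ J := by
      apply ht
      have : t * (g + h') = (t * g + (q + t * h')) - q := by ring
      rw [this]
      exact sub_mem hfJ (Ideal.mul_le_left hq)
    have : t * g + (q + t * h') = (g + h') * t + q := by ring
    rw [this, Ideal.mul_sup]
    exact add_mem
      (Ideal.mem_sup_left (Ideal.mul_mem_mul h2 (Ideal.mem_span_singleton_self t)))
      (Ideal.mem_sup_right hq)

theorem X_sub_X_mem_span_diffList (k : Type*) [Field k] {m : ℕ} {nv : Fin m → ℕ} (j : Fin m)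
    (p : ℕ) (hp : p < nv j) :
    (X ⟨j, ⟨0, by omega⟩⟩ - X ⟨j, ⟨p, hp⟩⟩ : MvPolynomial (Σ i : Fin m, Fin (nv i)) k) ∈
      Ideal.span {x | x ∈ diffList k m nv} := by
  induction p with
  | zero => simp
  | succ p ih =>
    have hmem : (X ⟨j, ⟨p, by omega⟩⟩ - X ⟨j, ⟨p + 1, hp⟩⟩ :
        MvPolynomial (Σ i : Fin m, Fin (nv i)) k) ∈ Ideal.span {x | x ∈ diffList k m nv} := by
      apply Ideal.subset_span
      simp only [diffList, Set.mem_ofPred_eq, List.mem_flatMap, List.mem_map]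
      exact ⟨j, List.mem_finRange _, ⟨p, by omega⟩, List.mem_finRange _, rfl⟩
    simpa using add_mem (ih (by omega)) hmem

/-- Monomials of equal multidegree agree modulo the variable differences: the quotient map
`S → S ⧸ L` factors through `π`. -/
theorem monomial_sub_mem_span_diffList (k : Type*) [Field k] {m : ℕ} {nv : Fin m → ℕ}
    (d d' : (Σ i : Fin m, Fin (nv i)) →₀ ℕ)
    (h : d.mapDomain Sigma.fst = d'.mapDomain Sigma.fst) :
    (monomial d (1 : k) - monomial d' 1) ∈ Ideal.span {x | x ∈ diffList k m nv} := by
  set L := Ideal.span {x | x ∈ diffList k m nv} with hL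
  let θ : MvPolynomial (Fin m) k →ₐ[k] (MvPolynomial (Σ i : Fin m, Fin (nv i)) k ⧸ L) :=
    aeval fun j => if h : 0 < nv j then Ideal.Quotient.mkₐ k L (X ⟨j, ⟨0, h⟩⟩) else 0
  have hθ : θ.comp (rename Sigma.fst) = Ideal.Quotient.mkₐ k L := by
    apply MvPolynomial.algHom_ext
    rintro ⟨j, p⟩
    have hj : 0 < nv j := by have := p.isLt; omega
    simp only [θ, AlgHom.comp_apply, rename_X, aeval_X, hj, dite_true]
    exact Ideal.Quotient.eq.2 (X_sub_X_mem_span_diffList k j p.1 p.2)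
  apply Ideal.Quotient.eq.1
  have h1 := DFunLike.congr_fun hθ (monomial d 1)
  have h2 := DFunLike.congr_fun hθ (monomial d' 1)
  simp only [AlgHom.comp_apply, rename_monomial, h] at h1 h2
  exact h1.symm.trans h2

theorem mapDomain_fst_apply {m : ℕ} {nv : Fin m → ℕ} (D : (Σ i : Fin m, Fin (nv i)) →₀ ℕ)
    (j : Fin m) : D.mapDomain Sigma.fst j = ∑ p : Fin (nv j), D ⟨j, p⟩ := by
  induction D using Finsupp.induction_linear with
  | zero => simp
  | add f g hf hg => simp [Finsupp.mapDomain_add, hf, hg, Finset.sum_add_distrib]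
  | single x c =>
    obtain ⟨j', p⟩ := x
    rw [Finsupp.mapDomain_single]
    by_cases hj : j' = j
    · subst hj
      simp [Finsupp.single_apply]
    · simp [hj]

theorem exists_mapDomain_fst_eq {m : ℕ} {nv : Fin m → ℕ} (e : Fin m →₀ ℕ)
    (he : ∀ j, e j ≠ 0 → 0 < nv j) :
    ∃ V : (Σ i : Fin m, Fin (nv i)) →₀ ℕ, V.mapDomain Sigma.fst = e := by
  induction e using Finsupp.induction_linear with
  | zero => exact ⟨0, by simp⟩
  | add f g hf hg =>
    obtain ⟨V, hV⟩ := hf fun j hj => he j (by simp [hj])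
    obtain ⟨W, hW⟩ := hg fun j hj => he j (by simp [hj])
    exact ⟨V + W, by rw [Finsupp.mapDomain_add, hV, hW]⟩
  | single j c =>
    by_cases hc : c = 0
    · exact ⟨0, by simp [hc]⟩
    · exact ⟨Finsupp.single ⟨j, ⟨0, he j (by simpa using hc)⟩⟩ c, by simp⟩

/-- The map on variable indices which keeps row `i` fixed and sends every other row `j` to its
first variable `x_{j0}`. -/
def collapse {m : ℕ} {nv : Fin m → ℕ} (i : Fin m) (x : Σ i : Fin m, Fin (nv i)) :
    Σ i : Fin m, Fin (nv i) :=
  if x.1 = i then x else ⟨x.1, ⟨0, by have := x.2.isLt; omega⟩⟩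

theorem mapDomain_collapse_apply {m : ℕ} {nv : Fin m → ℕ} (i : Fin m)
    (D : (Σ i : Fin m, Fin (nv i)) →₀ ℕ) (p : Fin (nv i)) :
    D.mapDomain (collapse i) ⟨i, p⟩ = D ⟨i, p⟩ := by
  induction D using Finsupp.induction_linear with
  | zero => simp
  | add f g hf hg => simp [Finsupp.mapDomain_add, hf, hg]
  | single x c =>
    rw [Finsupp.mapDomain_single]
    by_cases hx : x.1 = i
    · simp [collapse, hx]
    · have h1 : x ≠ ⟨i, p⟩ := by rintro rfl; exact hx rfl
      have h2 : collapse i x ≠ ⟨i, p⟩ := by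
        intro h
        apply hx
        have := congrArg Sigma.fst h
        rwa [collapse, if_neg hx] at this
      rw [Finsupp.single_eq_of_ne' h1, Finsupp.single_eq_of_ne' h2]

/-- The `i`-th part of the exponent vector `D`, i.e. its restriction to row `i`. -/
def rowPart {m : ℕ} {nv : Fin m → ℕ} (i : Fin m) (D : (Σ i : Fin m, Fin (nv i)) →₀ ℕ) :
    (Σ i : Fin m, Fin (nv i)) →₀ ℕ :=
  D.filter fun x => x.1 = i

theorem rowPart_le_mapDomain_collapse_iff {m : ℕ} {nv : Fin m → ℕ} (i : Fin m)
    (D E : (Σ i : Fin m, Fin (nv i)) →₀ ℕ) :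
    rowPart i D ≤ E.mapDomain (collapse i) ↔ ∀ p, D ⟨i, p⟩ ≤ E ⟨i, p⟩ := by
  constructor
  · intro h p
    have := h ⟨i, p⟩
    rwa [mapDomain_collapse_apply, rowPart,
      Finsupp.filter_apply_pos (fun x : Σ i : Fin m, Fin (nv i) => x.1 = i) _ rfl] at this
  · rintro h ⟨j, p⟩
    by_cases hj : j = i
    · subst hj
      rw [mapDomain_collapse_apply, rowPart,
        Finsupp.filter_apply_pos (fun x : Σ i : Fin m, Fin (nv i) => x.1 = j) _ rfl]
      exact h p
    · rw [rowPart, Finsupp.filter_apply_neg _ _ (by simpa using hj)]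
      exact Nat.zero_le _

theorem monomial_mem_span_singleton_iff (k : Type*) [Field k] {σ : Type*} (d e : σ →₀ ℕ) :
    monomial e (1 : k) ∈ Ideal.span {monomial d (1 : k)} ↔ d ≤ e := by
  rw [Ideal.mem_span_singleton, monomial_dvd_monomial]
  simp

/-- The linear map which extracts the component of multidegree `c` and then identifies the variables
inside every row other than row `i`. -/
def collapseComponent (k : Type*) [Field k] {m : ℕ} {nv : Fin m → ℕ} (i : Fin m)
    (c : Fin m →₀ ℕ) :
    MvPolynomial (Σ i : Fin m, Fin (nv i)) k →ₗ[k] MvPolynomial (Σ i : Fin m, Fin (nv i)) k :=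
  open Classical in
  (basisMonomials _ k).constr k fun d =>
    if d.mapDomain Sigma.fst = c then monomial (d.mapDomain (collapse i)) 1 else 0

open Classical in
theorem collapseComponent_monomial {k : Type*} [Field k] {m : ℕ} {nv : Fin m → ℕ} (i : Fin m)
    (c : Fin m →₀ ℕ) (d : (Σ i : Fin m, Fin (nv i)) →₀ ℕ) :
    collapseComponent k i c (monomial d 1) =
      if d.mapDomain Sigma.fst = c then monomial (d.mapDomain (collapse i)) 1 else 0 := by
  have := (basisMonomials (Σ i : Fin m, Fin (nv i)) k).constr_basis k (fun d =>
    if d.mapDomain Sigma.fst = c then monomial (d.mapDomain (collapse i)) (1 : k) else 0) d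
  rwa [coe_basisMonomials] at this

/-- To check that `collapseComponent k i c` maps `J L` into an ideal `M`, it suffices to look at
products of a monomial of `J` and a variable difference. -/
theorem collapseComponent_mem_of_mem_mul {k : Type*} [Field k] {m : ℕ} {nv : Fin m → ℕ}
    (i : Fin m) (c : Fin m →₀ ℕ)
    (G : Set ((Σ i : Fin m, Fin (nv i)) →₀ ℕ))
    (J : Ideal (MvPolynomial (Σ i : Fin m, Fin (nv i)) k))
    (hJ : J = Ideal.span ((fun d => monomial d (1 : k)) '' G))
    (s : Set (MvPolynomial (Σ i : Fin m, Fin (nv i)) k))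
    (M : Ideal (MvPolynomial (Σ i : Fin m, Fin (nv i)) k))
    (h : ∀ e, monomial e (1 : k) ∈ J → ∀ t ∈ s, collapseComponent k i c (monomial e 1 * t) ∈ M)
    (f : MvPolynomial (Σ i : Fin m, Fin (nv i)) k) (hf : f ∈ J * Ideal.span s) :
    collapseComponent k i c f ∈ M := by
  have key : ∀ t ∈ s, ∀ g ∈ J, collapseComponent k i c (g * t) ∈ M := by
    intro t ht g hg
    rw [g.as_sum, Finset.sum_mul, map_sum]
    refine sum_mem fun d hd => ?_
    have hdJ : monomial d (1 : k) ∈ J := by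
      rw [hJ, mem_ideal_span_monomial_image] at hg ⊢
      intro x hx
      have hx' : x = d := by
        classical
        simpa using support_monomial_subset hx
      exact hx' ▸ hg d hd
    have : monomial d (coeff d g) * t = coeff d g • (monomial d 1 * t) := by
      rw [← smul_mul_assoc, smul_monomial, smul_eq_mul, mul_one]
    rw [this, map_smul, smul_eq_C_mul]
    exact M.mul_mem_left _ (h d hdJ t ht)
  refine Submodule.mul_induction_on hf ?_ ?_
  · intro g hg t ht
    induction ht using Submodule.span_induction generalizing g with
    | mem t ht => exact key t ht g hg
    | zero => simp
    | add x y _ _ hx hy =>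
      rw [mul_add, map_add]
      exact add_mem (hx g hg) (hy g hg)
    | smul r x _ hx =>
      rw [smul_eq_mul, ← mul_assoc]
      exact hx _ (J.mul_mem_right _ hg)
  · intro x y hx hy
    rw [map_add]
    exact add_mem hx hy

/-- Every monomial of `J` whose multidegree agrees with `a` outside `i` is divisible by `m_i(a)`
after the variables of the other rows have been identified. -/
theorem rowPart_le_of_mem {k : Type*} [Field k] {m : ℕ} {nv : Fin m → ℕ}
    (I : Ideal (MvPolynomial (Fin m) k))
    (J : Ideal (MvPolynomial (Σ i : Fin m, Fin (nv i)) k))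
    (hpol : IsPolarization J I) (a : Fin m →₀ ℕ) (ha : IsMinGen I a)
    (Da : (Σ i : Fin m, Fin (nv i)) →₀ ℕ) (hDa : monomial Da (1 : k) ∈ J)
    (hπa : Da.mapDomain Sigma.fst = a) (i : Fin m) (n : ℕ) :
    ∀ d : (Σ i : Fin m, Fin (nv i)) →₀ ℕ, monomial d (1 : k) ∈ J →
      d.mapDomain Sigma.fst = a.update i n → rowPart i Da ≤ d.mapDomain (collapse i) := by
  classical
  obtain ⟨⟨G, -, hJ⟩, hI, hreg⟩ := hpol
  induction n using Nat.strong_induction_on with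
  | _ n ih =>
    intro d hd hdeg
    set c := d.mapDomain Sigma.fst with hc
    have hcI : monomial c (1 : k) ∈ I := by
      rw [← hI]
      simpa [rename_monomial] using Ideal.mem_map_of_mem
        (rename Sigma.fst : MvPolynomial (Σ i : Fin m, Fin (nv i)) k →ₐ[k] _) hd
    -- Otherwise `c` would lie strictly below the minimal exponent `a`.
    have hai : a i ≤ c i := by
      by_contra hlt
      refine ha.2 c ?_ ?_ hcI
      · intro j
        by_cases hj : j = i
        · subst hj; omega
        · simp [hdeg, hj]
      · intro h
        rw [h] at hlt
        exact hlt le_rfl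
    have hac : a ≤ c := by
      intro j
      by_cases hj : j = i
      · subst hj; exact hai
      · simp [hdeg, hj]
    obtain ⟨U, hU⟩ := exists_mapDomain_fst_eq (nv := nv) (c - a) (by
      intro j hj
      by_contra h0
      have h1 : c j = 0 := by
        rw [hc, mapDomain_fst_apply]
        exact Finset.sum_eq_zero fun p _ => absurd p.isLt (by omega)
      simp [h1] at hj)
    have hDU : (Da + U).mapDomain Sigma.fst = c := by
      rw [Finsupp.mapDomain_add, hπa, hU, add_tsub_cancel_of_le hac]
    have hDUJ : monomial (Da + U) (1 : k) ∈ J := by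
      have : monomial (Da + U) (1 : k) = monomial Da 1 * monomial U 1 := by
        rw [monomial_mul, mul_one]
      rw [this]
      exact J.mul_mem_right _ hDa
    have hprod := IsRegSeq.inf_span_le _ J hreg
      ⟨sub_mem hd hDUJ, monomial_sub_mem_span_diffList k d (Da + U) (hc.symm.trans hDU.symm)⟩
    have hmem := collapseComponent_mem_of_mem_mul i c G J hJ _
      (Ideal.span {monomial (rowPart i Da) (1 : k)}) (by
        intro e he t ht
        simp only [diffList, Set.mem_ofPred_eq, List.mem_flatMap, List.mem_map] at ht
        obtain ⟨j, -, p, -, rfl⟩ := ht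
        rw [mul_sub, X, X, monomial_mul, monomial_mul, mul_one, map_sub,
          collapseComponent_monomial, collapseComponent_monomial]
        simp only [Finsupp.mapDomain_add, Finsupp.mapDomain_single]
        by_cases hec : e.mapDomain Sigma.fst + Finsupp.single j 1 = c
        · rw [if_pos hec, if_pos hec]
          by_cases hj : j = i
          · subst hj
            -- Only here does the degree in row `i` drop, so that the induction hypothesis is used.
            have hle : rowPart j Da ≤ e.mapDomain (collapse j) := by
              have hn := DFunLike.congr_fun (hec.trans hdeg) j
              simp at hn
              refine ih (e.mapDomain Sigma.fst j) (by omega) e he ?_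
              ext q
              have := DFunLike.congr_fun (hec.trans hdeg) q
              by_cases hq : q = j
              · subst hq
                simp
              · simpa [Function.update_apply, hq, Finsupp.single_apply, Ne.symm hq] using this
            exact sub_mem
              ((monomial_mem_span_singleton_iff k _ _).2 (hle.trans le_self_add))
              ((monomial_mem_span_singleton_iff k _ _).2 (hle.trans le_self_add))
          · simp [collapse, hj]
        · simp [if_neg hec]) _ hprod
    rw [map_sub, collapseComponent_monomial, collapseComponent_monomial, if_pos hc.symm,
      if_pos hDU] at hmem
    have hDUM : monomial ((Da + U).mapDomain (collapse i)) (1 : k) ∈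
        Ideal.span {monomial (rowPart i Da) (1 : k)} :=
      (monomial_mem_span_singleton_iff k _ _).2
        ((rowPart_le_mapDomain_collapse_iff i _ _).2 fun p => by simp)
    exact (monomial_mem_span_singleton_iff k _ _).1 (by simpa using add_mem hmem hDUM)

/-- Let `J` be a polarization of a monomial ideal `I`, let `x^a` and `x^b` be
minimal generators of `I` with corresponding generators `m(a)` (with exponent vector `Da`) and
`m(b)` (with exponent vector `Db`) of `J`, and fix an index `i`. If `a_i ≤ b_i` and `a_j ≥ b_j`
for every `j ≠ i`, then the `i`-th part `m_i(a)` divides `m_i(b)`. -/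
theorem stmt_1 {k : Type*} [Field k] {m : ℕ} {nv : Fin m → ℕ}
    (I : Ideal (MvPolynomial (Fin m) k))
    (hmono : ∃ G : Set ((Fin m) →₀ ℕ), I = Ideal.span ((fun d => monomial d (1 : k)) '' G))
    (J : Ideal (MvPolynomial (Σ i : Fin m, Fin (nv i)) k))
    (hpol : IsPolarization J I)
    (a b : Fin m →₀ ℕ)
    (ha : IsMinGen I a) (hb : IsMinGen I b)
    (Da Db : (Σ i : Fin m, Fin (nv i)) →₀ ℕ)
    (hDa : IsMinGen J Da) (hDb : IsMinGen J Db)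
    (hsqa : ∀ x, Da x ≤ 1) (hsqb : ∀ x, Db x ≤ 1)
    (hπa : ∀ i : Fin m, ∑ j : Fin (nv i), Da ⟨i, j⟩ = a i)
    (hπb : ∀ i : Fin m, ∑ j : Fin (nv i), Db ⟨i, j⟩ = b i)
    (i : Fin m)
    (hab_i : a i ≤ b i) (hab : ∀ j, j ≠ i → b j ≤ a j) :
    ∀ p : Fin (nv i), Da ⟨i, p⟩ ≤ Db ⟨i, p⟩ := by
  classical
  have hA : Da.mapDomain Sigma.fst = a := by
    ext j
    rw [mapDomain_fst_apply, hπa]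
  have hB : Db.mapDomain Sigma.fst = b := by
    ext j
    rw [mapDomain_fst_apply, hπb]
  -- Truncated subtraction: `a.update i 0 - b` vanishes at `i` and is `a j - b j` for `j ≠ i`.
  obtain ⟨V, hV⟩ := exists_mapDomain_fst_eq (nv := nv) (a.update i 0 - b) (by
    intro j hj
    by_contra h0
    have h1 : a j = 0 := by
      rw [← hπa]
      exact Finset.sum_eq_zero fun p _ => absurd p.isLt (by omega)
    apply hj
    simp [Function.update_apply, h1])
  have hVi : ∀ p, V ⟨i, p⟩ = 0 := by
    have h := mapDomain_fst_apply V i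
    rw [hV] at h
    simpa using h.symm
  have hmem : monomial (Db + V) (1 : k) ∈ J := by
    have : monomial (Db + V) (1 : k) = monomial Db 1 * monomial V 1 := by
      rw [monomial_mul, mul_one]
    rw [this]
    exact J.mul_mem_right _ hDb.1
  have hle := rowPart_le_of_mem I J hpol a ha Da hDa.1 hA i (b i) (Db + V) hmem (by
    rw [Finsupp.mapDomain_add, hB, hV]
    ext j
    by_cases hj : j = i
    · subst hj
      simp
    · have := hab j hj
      simp [hj]
      omega)
  intro p
  have := (rowPart_le_mapDomain_collapse_iff i _ _).1 hle p
  simpa [hVi p] using this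
end
end

section
/- Every polarization J of an Artinian monomial ideal I is a separated model of I; that is, J admits no simple separation: there exists no monomial ideal J′ in a polynomial ring with one more variable (obtained by replacing one variable x_r of the ambient ring of J by two variables x_{r_1}, x_{r_2}) such that J is the image of J′ under the map identifying x_{r_1} and x_{r_2} with x_r, both x_{r_1} and x_{r_2} occur in minimal generators of J′, and x_{r_1} − x_{r_2} is a nonzerodivisor on the quotient of the larger polynomial ring by J′. -/
/-!
The point is that in a simple separation `J'` one of the two separated variables is a
nonzerodivisor on the quotient by `J'`, hence occurs in no minimal generator.

Let the separated variable `x_r` lie over `x_i`. A pure power of `x_i` lies in `I`, so `J` contains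
a squarefree monomial `x^d` in the variables over `x_i` only, and `J'` contains a monomial `x^e`
lying over a divisor of `x^d`. As `x^d` is squarefree, `x^e` omits one of the two separated
variables; call it `x_t`. For every `x_s` dividing `x^e` the difference `x_s - x_t` is a
nonzerodivisor modulo `J'`. Therefore, if `x_t f ∈ J'`, then `∏ (x_s - x_t)^{e_s} f ≡ x^e f ≡ 0`
modulo `J'`, so `f ∈ J'` (`isNzd_X_of_monomial_mem`).

That the differences `x_s - x_t` are nonzerodivisors rests on `IsNzd.of_sup_span`: modulo a
homogeneous ideal, if `θ, η` is a regular sequence and `θ` is a linear form, then `η` is itself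
regular. It gives the regularity modulo `J` of the difference of any two variables over `x_i`, a
telescoping sum of members of the given regular sequence (`IsRegSeq.isNzd_sum`,
`isNzd_X_sub_X`), and the passage from `J` to `J'` (`isNzd_of_rename`).
-/

open MvPolynomial

noncomputable section

/-- An Artinian monomial ideal: a monomial ideal such that for every variable `x_i`
some pure power `x_i^{n_i}` is a minimal generator. -/
def IsArtinianMonomialIdeal {k : Type*} [Field k] {m : ℕ}
    (I : Ideal (MvPolynomial (Fin m) k)) : Prop :=
  (∃ G : Set ((Fin m) →₀ ℕ), I = Ideal.span ((fun d => monomial d (1 : k)) '' G)) ∧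
  ∀ i : Fin m, ∃ ni : ℕ, IsMinGen I (Finsupp.single i ni)

/-- `J'`, a monomial ideal in the polynomial ring with one more variable (the variable `x_r` of
the ambient ring of `J` being split into the two variables indexed by `none` and `some r`), is a
simple separation of `J`: `J` is the image of `J'` under the map identifying the two new
variables with `x_r`, both new variables occur in minimal generators of `J'`, and their
difference is a nonzerodivisor on the quotient by `J'`. -/
def IsSimpleSeparation {k : Type*} [Field k] {σ : Type*}
    (J' : Ideal (MvPolynomial (Option σ) k)) (J : Ideal (MvPolynomial σ k)) (r : σ) : Prop :=
  (∃ G : Set (Option σ →₀ ℕ), J' = Ideal.span ((fun d => monomial d (1 : k)) '' G)) ∧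
  Ideal.map
    (rename (fun o : Option σ => o.getD r) :
      MvPolynomial (Option σ) k →ₐ[k] MvPolynomial σ k) J' = J ∧
  (∃ d, IsMinGen J' d ∧ 1 ≤ d none) ∧
  (∃ d, IsMinGen J' d ∧ 1 ≤ d (some r)) ∧
  (∀ f, (MvPolynomial.X none - MvPolynomial.X (some r)) * f ∈ J' → f ∈ J')

section Nonzerodivisors

/-! ### Nonzerodivisors modulo an ideal -/

/-- `a` is a nonzerodivisor on `A ⧸ J`, in the form used by `IsRegSeq`. -/
def IsNzd {A : Type*} [CommRing A] (J : Ideal A) (a : A) : Prop :=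
  ∀ f, a * f ∈ J → f ∈ J

variable {A : Type*} [CommRing A] {J : Ideal A}

lemma IsNzd.mul {a b : A} (ha : IsNzd J a) (hb : IsNzd J b) : IsNzd J (a * b) :=
  fun f hf => hb f (ha _ (by rwa [← mul_assoc]))

lemma isNzd_one : IsNzd J 1 := fun f hf => by simpa using hf

lemma IsNzd.pow {a : A} (ha : IsNzd J a) (n : ℕ) : IsNzd J (a ^ n) := by
  induction n with
  | zero => simpa using isNzd_one
  | succ n ih => rw [pow_succ]; exact ih.mul ha

lemma IsNzd.prod {ι : Type*} (s : Finset ι) (a : ι → A) (ha : ∀ i ∈ s, IsNzd J (a i)) :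
    IsNzd J (∏ i ∈ s, a i) :=
  Finset.prod_induction a (IsNzd J) (fun _ _ => IsNzd.mul) isNzd_one ha

lemma IsNzd.sub_symm {a b : A} (h : IsNzd J (a - b)) : IsNzd J (b - a) := by
  intro f hf
  refine h f ?_
  have := J.neg_mem hf
  rwa [← neg_mul, neg_sub] at this

lemma IsNzd.congr {a b : A} (hab : a - b ∈ J) (h : IsNzd J b) : IsNzd J a := by
  intro f hf
  refine h f ?_
  have h1 : b * f = a * f - (a - b) * f := by ring
  rw [h1]
  exact J.sub_mem hf (J.mul_mem_right _ hab)

end Nonzerodivisors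

/-! ### Sums of members of a regular sequence of linear forms -/

section Graded

variable {k : Type*} [Field k] {σ : Type*}

attribute [local instance] MvPolynomial.gradedAlgebra

lemma homogeneousComponent_mul_eq_zero {n d : ℕ} (hd : d < n) {p : MvPolynomial σ k}
    (hp : p.IsHomogeneous n) (g : MvPolynomial σ k) :
    homogeneousComponent d (p * g) = 0 := by
  conv_lhs => rw [← sum_homogeneousComponent g, Finset.mul_sum, map_sum]
  refine Finset.sum_eq_zero fun j _ => ?_
  rw [homogeneousComponent_of_mem (hp.mul (homogeneousComponent_isHomogeneous j g)),
    if_neg (by omega)]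

lemma isHomogeneous_span_monomial (G : Set (σ →₀ ℕ)) :
    (Ideal.span ((fun d => monomial d (1 : k)) '' G)).IsHomogeneous
      (homogeneousSubmodule σ k) := by
  refine Ideal.homogeneous_span _ _ ?_
  rintro _ ⟨d, _, rfl⟩
  exact ⟨_, isHomogeneous_monomial _ rfl⟩

lemma isHomogeneous_sup_span {J : Ideal (MvPolynomial σ k)} {θ : MvPolynomial σ k}
    (hJ : J.IsHomogeneous (homogeneousSubmodule σ k)) (hθ : θ.IsHomogeneous 1) :
    (J ⊔ Ideal.span {θ}).IsHomogeneous (homogeneousSubmodule σ k) := by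
  refine hJ.sup (Ideal.homogeneous_span _ _ ?_)
  rintro _ rfl
  exact ⟨1, hθ⟩

/-- If `θ, η` is a regular sequence on the quotient by a homogeneous ideal `J` and `θ` is a linear
form, then `η` alone is already regular: a polynomial annihilated by `η` modulo `J` lies in
`J + (θ ^ n)` for every `n`, and the intersection of these ideals is `J` for degree reasons. -/
lemma IsNzd.of_sup_span {J : Ideal (MvPolynomial σ k)} {θ η : MvPolynomial σ k}
    (hJ : J.IsHomogeneous (homogeneousSubmodule σ k)) (hθ : θ.IsHomogeneous 1)
    (h1 : IsNzd J θ) (h2 : IsNzd (J ⊔ Ideal.span {θ}) η) : IsNzd J η := by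
  intro f hf
  have key : ∀ n : ℕ, ∀ f, η * f ∈ J → ∃ g, f - θ ^ n * g ∈ J := by
    intro n
    induction n with
    | zero => exact fun f _ => ⟨f, by simp⟩
    | succ n ih =>
      intro f hf
      obtain ⟨j, hj, t, ht, hjt⟩ := Submodule.mem_sup.1 (h2 f (Ideal.mem_sup_left hf))
      obtain ⟨g, rfl⟩ := Ideal.mem_span_singleton'.1 ht
      have hg : η * g ∈ J := by
        refine h1 _ ?_
        have h3 : θ * (η * g) = η * f - η * j := by rw [← hjt]; ring
        rw [h3]
        exact J.sub_mem hf (J.mul_mem_left _ hj)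
      obtain ⟨g', hg'⟩ := ih g hg
      refine ⟨g', ?_⟩
      have h4 : f - θ ^ (n + 1) * g' = j + θ * (g - θ ^ n * g') := by rw [← hjt]; ring
      rw [h4]
      exact J.add_mem hj (J.mul_mem_left _ hg')
  rw [mem_iff_homogeneousComponent_mem hJ]
  intro d
  obtain ⟨g, hg⟩ := key (d + 1) f hf
  have h5 := homogeneousComponent_mem_of_mem hJ hg d
  have hθn : (θ ^ (d + 1)).IsHomogeneous (d + 1) := by simpa using hθ.pow (d + 1)
  rwa [map_sub, homogeneousComponent_mul_eq_zero (Nat.lt_succ_self d) hθn, sub_zero] at h5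

/-- The sum of any nonempty subfamily of a regular sequence of linear forms is regular. -/
lemma IsRegSeq.isNzd_sum {l' l : List (MvPolynomial σ k)} (hl : l'.Sublist l)
    (hne : l' ≠ []) (hdeg : ∀ a ∈ l, a.IsHomogeneous 1) {J : Ideal (MvPolynomial σ k)}
    (hJ : J.IsHomogeneous (homogeneousSubmodule σ k)) (hreg : IsRegSeq l J) :
    IsNzd J l'.sum := by
  induction hl generalizing J with
  | slnil => exact absurd rfl hne
  | cons a hl ih =>
    have ha := hdeg a (by simp)
    exact IsNzd.of_sup_span hJ ha hreg.1
      (ih hne (fun b hb => hdeg b (by simp [hb])) (isHomogeneous_sup_span hJ ha) hreg.2)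
  | @cons_cons l₁ l₂ a hl ih =>
    have ha := hdeg a (by simp)
    rw [List.sum_cons]
    by_cases h : l₁ = []
    · subst h
      rw [List.sum_nil, add_zero]
      exact hreg.1
    · refine IsNzd.of_sup_span hJ ha hreg.1 (IsNzd.congr ?_
        (ih h (fun b hb => hdeg b (by simp [hb])) (isHomogeneous_sup_span hJ ha) hreg.2))
      rw [add_sub_cancel_right]
      exact Ideal.mem_sup_right (Ideal.mem_span_singleton_self a)

lemma isHomogeneous_X_sub_X (s t : σ) :
    (X s - X t : MvPolynomial σ k).IsHomogeneous 1 :=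
  (isHomogeneous_X k s).sub (isHomogeneous_X k t)

end Graded

/-! ### Differences of variables of a polarization -/

lemma sum_map_filter_eq {α A : Type*} [AddCommMonoid A] (P : α → Prop) [DecidablePred P]
    (g : α → A) (l : List α) :
    ((l.filter (fun a => decide (P a))).map g).sum = (l.map fun a => if P a then g a else 0).sum := by
  induction l with
  | nil => rfl
  | cons a l ih =>
    by_cases h : P a <;> simp [h, ih]

lemma sum_finRange_telescope {A : Type*} [AddCommGroup A] (F : ℕ → A) {N p q : ℕ}
    (hpq : p ≤ q) (hq : q ≤ N) :
    (((List.finRange N).filter (fun j => decide (p ≤ j.1 ∧ j.1 < q))).map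
      fun j => F j.1 - F (j.1 + 1)).sum = F p - F q := by
  rw [sum_map_filter_eq (fun j : Fin N => p ≤ j.1 ∧ j.1 < q), ← List.ofFn_eq_map, List.sum_ofFn,
    ← Finset.sum_range (fun j => if p ≤ j ∧ j < q then F j - F (j + 1) else 0),
    ← Finset.sum_filter]
  have h : (Finset.range N).filter (fun j => p ≤ j ∧ j < q) = Finset.Ico p q := by
    ext j
    simp only [Finset.mem_filter, Finset.mem_range, Finset.mem_Ico]
    omega
  rw [h, ← neg_sub (F q), ← Finset.sum_Ico_sub F hpq, ← Finset.sum_neg_distrib]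
  simp

section Polarization

variable {k : Type*} [Field k] {m : ℕ} {nv : Fin m → ℕ}

attribute [local instance] MvPolynomial.gradedAlgebra

lemma isHomogeneous_of_mem_diffList {a : MvPolynomial (Σ i : Fin m, Fin (nv i)) k}
    (ha : a ∈ diffList k m nv) : a.IsHomogeneous 1 := by
  simp only [diffList, List.mem_flatMap, List.mem_map] at ha
  obtain ⟨i, _, j, _, rfl⟩ := ha
  exact isHomogeneous_X_sub_X _ _

/-- If the consecutive differences form a regular sequence on the quotient by a homogeneous ideal,
then the difference of any two distinct variables over the same `x_i` is regular, being a
telescoping sum of consecutive ones. -/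
lemma isNzd_X_sub_X {J : Ideal (MvPolynomial (Σ i : Fin m, Fin (nv i)) k)}
    (hJ : J.IsHomogeneous (homogeneousSubmodule _ k)) (hreg : IsRegSeq (diffList k m nv) J)
    {i : Fin m} {p q : Fin (nv i)} (hpq : p ≠ q) :
    IsNzd J (X ⟨i, p⟩ - X ⟨i, q⟩) := by
  wlog hlt : p < q generalizing p q
  · exact (this hpq.symm (lt_of_le_of_ne (not_lt.1 hlt) hpq.symm)).sub_symm
  let F : ℕ → MvPolynomial (Σ i : Fin m, Fin (nv i)) k :=
    fun j => if h : j < nv i then X ⟨i, ⟨j, h⟩⟩ else 0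
  let fl := (List.finRange (nv i - 1)).filter (fun j => decide (p.1 ≤ j.1 ∧ j.1 < q.1))
  have hlt' : p.1 < q.1 := hlt
  have hqN : q.1 ≤ nv i - 1 := by have := q.isLt; omega
  have hsum : (fl.map fun j => F j.1 - F (j.1 + 1)).sum = X ⟨i, p⟩ - X ⟨i, q⟩ := by
    rw [sum_finRange_telescope F hlt'.le hqN]
    simp [F]
  have hsub : (fl.map fun j => F j.1 - F (j.1 + 1)).Sublist (diffList k m nv) := by
    refine (List.filter_sublist.map _).trans ?_
    have hmem := List.sublist_flatten_of_mem (List.mem_map_of_mem (f := fun i : Fin m =>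
      (List.finRange (nv i - 1)).map fun j : Fin (nv i - 1) =>
        (X ⟨i, ⟨j.1, by have := j.isLt; omega⟩⟩ - X ⟨i, ⟨j.1 + 1, by have := j.isLt; omega⟩⟩ :
          MvPolynomial (Σ i : Fin m, Fin (nv i)) k)) (List.mem_finRange i))
    rw [← List.flatMap_def] at hmem
    change List.Sublist _ (diffList k m nv) at hmem
    convert hmem using 2
    funext j
    have h1 : j.1 < nv i := by have := j.isLt; omega
    have h2 : j.1 + 1 < nv i := by have := j.isLt; omega
    simp [F, h1, h2]
  have hne : (fl.map fun j => F j.1 - F (j.1 + 1)) ≠ [] := by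
    have : (⟨p.1, by omega⟩ : Fin (nv i - 1)) ∈ fl := by simp [fl, hlt']
    simpa using List.ne_nil_of_mem this
  rw [← hsum]
  exact IsRegSeq.isNzd_sum hsub hne (fun _ => isHomogeneous_of_mem_diffList) hJ hreg

end Polarization

/-! ### Simple separations -/

section Separation

variable {k : Type*} [Field k] {σ : Type*}

attribute [local instance] MvPolynomial.gradedAlgebra

lemma exists_mapDomain_le {τ : Type*} (f : σ → τ) {G : Set (σ →₀ ℕ)} {D : τ →₀ ℕ}
    (h : monomial D (1 : k) ∈ Ideal.map (rename f : MvPolynomial σ k →ₐ[k] MvPolynomial τ k)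
      (Ideal.span ((fun d => monomial d (1 : k)) '' G))) :
    ∃ d ∈ G, d.mapDomain f ≤ D := by
  have himg : (rename f : MvPolynomial σ k →ₐ[k] MvPolynomial τ k) ''
      ((fun d => monomial d (1 : k)) '' G) =
      (fun d => monomial d (1 : k)) '' (Finsupp.mapDomain f '' G) := by
    simp only [Set.image_image, rename_monomial]
  rw [Ideal.map_span, himg, mem_ideal_span_monomial_image] at h
  obtain ⟨_, ⟨d, hd, rfl⟩, hle⟩ := h D (by
    classical
    rw [mem_support_iff, coeff_monomial, if_pos rfl]
    exact one_ne_zero)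
  exact ⟨d, hd, hle⟩

lemma le_mapDomain_apply {τ : Type*} (f : σ → τ) (d : σ →₀ ℕ) (s : σ) :
    d s ≤ d.mapDomain f (f s) := by
  have h : Finsupp.single s (d s) ≤ d := by
    classical
    intro t
    by_cases hst : s = t
    · subst hst; simp
    · simp [hst]
  obtain ⟨c, hc⟩ := exists_add_of_le h
  conv_rhs => rw [hc, Finsupp.mapDomain_add, Finsupp.mapDomain_single]
  simp

/-- Let `x^e ∈ J`. If `x_s - x_t` is regular for every `x_s` dividing `x^e`, so is `x_t`: an `f`
with `x_t f ∈ J` is annihilated modulo `J` by `∏ (x_s - x_t)^{e_s}`, which agrees with `x^e`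
modulo `x_t`. -/
lemma isNzd_X_of_monomial_mem {J : Ideal (MvPolynomial σ k)} {e : σ →₀ ℕ} {t : σ}
    (he : monomial e (1 : k) ∈ J) (h : ∀ s ∈ e.support, IsNzd J (X s - X t)) :
    IsNzd J (X t) := by
  intro f hf
  refine IsNzd.prod e.support (fun s => (X s - X t) ^ e s) (fun s hs => (h s hs).pow _) f ?_
  have hmod : (∏ s ∈ e.support, (X s - X t : MvPolynomial σ k) ^ e s) - monomial e 1 ∈
      Ideal.span {(X t : MvPolynomial σ k)} := by
    rw [monomial_eq, C_1, one_mul, Finsupp.prod, ← Ideal.Quotient.eq, map_prod, map_prod]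
    refine Finset.prod_congr rfl fun s _ => ?_
    have ht : Ideal.Quotient.mk (Ideal.span {(X t : MvPolynomial σ k)}) (X t) = 0 :=
      Ideal.Quotient.eq_zero_iff_mem.2 (Ideal.mem_span_singleton_self (X t))
    rw [map_pow, map_pow, map_sub, ht, sub_zero]
  obtain ⟨c, hc⟩ := Ideal.mem_span_singleton'.1 hmod
  have h1 : (∏ s ∈ e.support, (X s - X t : MvPolynomial σ k) ^ e s) * f =
      c * (X t * f) + f * monomial e 1 := by
    rw [← mul_assoc, hc]; ring
  rw [h1]
  exact J.add_mem (J.mul_mem_left _ hf) (J.mul_mem_left _ he)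

lemma IsMinGen.not_isNzd_X {J : Ideal (MvPolynomial σ k)} {d : σ →₀ ℕ} (hd : IsMinGen J d)
    {t : σ} (ht : 1 ≤ d t) : ¬ IsNzd J (X t) := by
  intro h
  have hle : Finsupp.single t 1 ≤ d := Finsupp.single_le_iff.2 ht
  refine hd.2 (d - Finsupp.single t 1) tsub_le_self ?_ (h _ ?_)
  · intro heq
    have := DFunLike.congr_fun heq t
    simp at this
    omega
  · rw [X, monomial_mul, one_mul, add_tsub_cancel_of_le hle]
    exact hd.1

/-- Regularity lifts along the identification of the two separated variables. -/
lemma isNzd_of_rename {J' : Ideal (MvPolynomial (Option σ) k)} {J : Ideal (MvPolynomial σ k)}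
    {r : σ} (hJ' : J'.IsHomogeneous (homogeneousSubmodule _ k))
    (hmap : Ideal.map (rename (fun o : Option σ => o.getD r) :
      MvPolynomial (Option σ) k →ₐ[k] MvPolynomial σ k) J' = J)
    (hθ : IsNzd J' (X none - X (some r))) {η : MvPolynomial (Option σ) k}
    (hη : IsNzd J (rename (fun o : Option σ => o.getD r) η)) : IsNzd J' η := by
  set φ : MvPolynomial (Option σ) k →ₐ[k] MvPolynomial σ k :=
    rename (fun o : Option σ => o.getD r) with hφ
  set θ : MvPolynomial (Option σ) k := X none - X (some r) with hθdef
  refine IsNzd.of_sup_span hJ' (isHomogeneous_X_sub_X _ _) hθ fun f hf => ?_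
  have hsec : Function.LeftInverse φ (rename some) := fun f => by
    rw [hφ, rename_rename]
    exact rename_id_apply f
  -- Modulo `θ`, the section `rename some` is a left inverse of `φ` as well.
  have hker : ∀ g, g - rename some (φ g) ∈ Ideal.span {θ} := by
    intro g
    rw [← Ideal.Quotient.eq]
    have hhom : (Ideal.Quotient.mkₐ k (Ideal.span {θ})) =
        ((Ideal.Quotient.mkₐ k (Ideal.span {θ})).comp (rename some)).comp φ := by
      ext o
      rcases o with _ | s
      · simp only [hφ, AlgHom.comp_apply, rename_X, Ideal.Quotient.mkₐ_eq_mk, Option.getD_none]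
        rw [Ideal.Quotient.eq]
        exact Ideal.mem_span_singleton_self θ
      · simp [hφ]
    exact DFunLike.congr_fun hhom g
  have hφθ : φ θ = 0 := by simp [hφ, hθdef]
  have hφf : φ f ∈ Ideal.map φ J' := by
    rw [hmap]
    refine hη _ ?_
    rw [← map_mul, ← hmap]
    have h1 := Ideal.mem_map_of_mem φ hf
    rw [Ideal.map_sup, Ideal.map_span, Set.image_singleton, hφθ] at h1
    simpa using h1
  obtain ⟨j, hj, hjf⟩ := (Ideal.mem_map_iff_of_surjective φ hsec.surjective).1 hφf
  have h2 : f = j + (f - j) := by ring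
  rw [h2]
  refine Submodule.add_mem_sup hj ?_
  have h3 := hker (f - j)
  rwa [map_sub, hjf, sub_self, map_zero, sub_zero] at h3

end Separation

/-- Every polarization `J` of an Artinian monomial ideal `I` is a separated
model of `I`: `J` admits no simple separation. -/
theorem stmt_2 {k : Type*} [Field k] {m : ℕ} {nv : Fin m → ℕ}
    (I : Ideal (MvPolynomial (Fin m) k)) (hart : IsArtinianMonomialIdeal I)
    (J : Ideal (MvPolynomial (Σ i : Fin m, Fin (nv i)) k))
    (hpol : IsPolarization J I) :
    ∀ (r : Σ i : Fin m, Fin (nv i))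
      (J' : Ideal (MvPolynomial (Option (Σ i : Fin m, Fin (nv i))) k)),
      ¬ IsSimpleSeparation J' J r := by
  rintro ⟨i, p⟩ J' ⟨⟨G', hG'⟩, hmap, ⟨d₁, hd₁, hd₁'⟩, ⟨d₂, hd₂, hd₂'⟩, hθ⟩
  obtain ⟨⟨G, hsq, hG⟩, hI, hreg⟩ := hpol
  obtain ⟨n, hn, -⟩ := hart.2 i
  have hhom' := hG' ▸ isHomogeneous_span_monomial (k := k) G'
  have hhom := hG ▸ isHomogeneous_span_monomial (k := k) G
  -- `x^d ∈ J` lies over the pure power `x_i^n`, and `x^e ∈ J'` lies over `x^d`.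
  rw [← hI, hG] at hn
  obtain ⟨d, hd, hdle⟩ := exists_mapDomain_le _ hn
  have hdJ : monomial d (1 : k) ∈ J := hG ▸ Ideal.subset_span ⟨d, hd, rfl⟩
  rw [← hmap, hG'] at hdJ
  obtain ⟨e, he, hele⟩ := exists_mapDomain_le _ hdJ
  have heJ' : monomial e (1 : k) ∈ J' := hG' ▸ Ideal.subset_span ⟨e, he, rfl⟩
  have hsupp : ∀ s : Σ i : Fin m, Fin (nv i), some s ∈ e.support → s.1 = i := by
    intro s hs
    by_contra hne
    have h1 := le_mapDomain_apply (fun o : Option (Σ i : Fin m, Fin (nv i)) => o.getD ⟨i, p⟩)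
      e (some s)
    have h2 := hele s
    have h3 := le_mapDomain_apply (Sigma.fst : (Σ i : Fin m, Fin (nv i)) → Fin m) d s
    have h4 := hdle s.1
    rw [Finsupp.single_eq_of_ne hne] at h4
    rw [Finsupp.mem_support_iff] at hs
    simp only [Option.getD_some] at h1
    omega
  have hnzd : ∀ q : Fin (nv i), q ≠ p →
      ∀ t : Option (Σ i : Fin m, Fin (nv i)), t.getD ⟨i, p⟩ = ⟨i, p⟩ →
      IsNzd J' (X (some ⟨i, q⟩) - X t) := by
    intro q hq t ht
    refine isNzd_of_rename hhom' hmap hθ ?_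
    rw [map_sub, rename_X, rename_X, ht]
    exact isNzd_X_sub_X hhom hreg hq
  -- `x^d` is squarefree, so `x^e` involves at most one of the two separated variables.
  have hone : e none = 0 ∨ e (some ⟨i, p⟩) = 0 := by
    by_contra! hcon
    have hle : Finsupp.single none 1 + Finsupp.single (some ⟨i, p⟩) 1 ≤ e := by
      classical
      intro o
      rw [Finsupp.add_apply, Finsupp.single_apply, Finsupp.single_apply]
      rcases o with _ | s
      · simpa [Nat.one_le_iff_ne_zero] using hcon.1
      · by_cases hs : (⟨i, p⟩ : Σ i : Fin m, Fin (nv i)) = s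
        · subst hs
          simpa [Nat.one_le_iff_ne_zero] using hcon.2
        · simp [hs]
    obtain ⟨c, rfl⟩ := exists_add_of_le hle
    have h1 := hele ⟨i, p⟩
    have h2 := hsq d hd ⟨i, p⟩
    simp only [Finsupp.mapDomain_add, Finsupp.mapDomain_single, Option.getD_none,
      Option.getD_some, Finsupp.add_apply, Finsupp.single_eq_same] at h1
    omega
  -- The separated variable that does not divide `x^e` is regular on the quotient by `J'`.
  rcases hone with h0 | h0
  · refine hd₁.not_isNzd_X hd₁' (isNzd_X_of_monomial_mem heJ' ?_)
    rintro (_ | ⟨i', q⟩) hs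
    · exact absurd h0 (Finsupp.mem_support_iff.1 hs)
    · obtain rfl : i' = i := hsupp _ hs
      by_cases hq : q = p
      · subst hq
        exact IsNzd.sub_symm hθ
      · exact hnzd q hq none rfl
  · refine hd₂.not_isNzd_X hd₂' (isNzd_X_of_monomial_mem heJ' ?_)
    rintro (_ | ⟨i', q⟩) hs
    · exact hθ
    · obtain rfl : i' = i := hsupp _ hs
      by_cases hq : q = p
      · subst hq
        exact absurd h0 (Finsupp.mem_support_iff.1 hs)
      · exact hnzd q hq (some _) rfl
end
end

section
/- Let X_1,…,X_m be rank-preserving isotone maps from Δ_m(n) to B(n) and let J be the ideal they determine. Then J is a polarization of (x_1,…,x_m)^n if and only if for every c ∈ Δ_m(n+1) the linear syzygy edges among the edges of the down-graph D(c) contain a spanning tree of D(c) (equivalently, the subgraph of D(c) consisting of linear syzygy edges is connected on the vertex set of D(c)). -/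
/-!
Write `S = k[X̌_1, …, X̌_m]`, `T = k[x_1, …, x_m]` and `π : S → T`, `x_{ij} ↦ x_i`. The generators
`m(b)` are squarefree and map to the monomials `x^b` of degree `n`, so only the regularity of the
sequence of variable differences is at stake. The differences are a regular sequence on `S` itself
and generate `ker π` (`isRegSeq_diffs_bot`, `span_diffs`).

Regularity on `S ⧸ J` is equivalent to the statement (`SyzLift`) that every syzygy of the `x^b`
over `T` lifts to a syzygy of the `m(b)` over `S`. If the sequence is regular, a relation is lifted
through one difference at a time (`syz_lift_of_isRegSeq`). Conversely, if syzygies lift through the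
whole sequence, then by induction on the degree they lift from every intermediate quotient of `S` as
well, and lifting modulo one more difference shows that it is a nonzerodivisor
(`isRegSeq_of_syzLift`).

Finally, syzygies lift if and only if the linear syzygy edges connect every down-graph. An edge
`(c; i, j)` is a linear syzygy edge exactly if `x_{iα} m(c - e_i) = x_{jβ} m(c - e_j)` for some
`α`, `β`. If these edges connect all the `D(c)`, then all relations `x_i e_{c - e_i} - x_j e_{c - e_j}`
over `T` lift, and they generate the syzygies of the `x^b` (`syzLift_of_connected`). If some `D(c)` is
disconnected, a relation between two components cannot lift, because the sum of the coefficients at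
the monomials `x_{rα} m(c - e_r)`, with `r` in one component, separates it from the syzygies
(`connected_of_syzLift`).
-/

open MvPolynomial

noncomputable section

/-- The list of variable differences `x_{i,j} - x_{i,j+1}` for `1 ≤ i ≤ m`, `1 ≤ j ≤ n-1`,
in `k[X̌_1, …, X̌_m]` with `X̌_i = {x_{i1}, …, x_{in}}`. -/
def diffs (k : Type*) [Field k] (m n : ℕ) : List (MvPolynomial (Fin m × Fin n) k) :=
  (List.finRange m).flatMap fun i =>
    (List.finRange (n - 1)).map fun j =>
      MvPolynomial.X (i, ⟨j.1, by have := j.isLt; omega⟩) -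
        MvPolynomial.X (i, ⟨j.1 + 1, by have := j.isLt; omega⟩)

/-- `b + e_i`. -/
def addE {m : ℕ} (b : Fin m → ℕ) (i : Fin m) : Fin m → ℕ :=
  fun t => b t + if t = i then 1 else 0

/-- `c - e_i` (truncated subtraction). -/
def subE {m : ℕ} (c : Fin m → ℕ) (i : Fin m) : Fin m → ℕ :=
  fun t => c t - if t = i then 1 else 0

/-- The monomial `m(b) = m_1(b) ⋯ m_m(b)` with `m_i(b) = ∏_{j ∈ X_i(b)} x_{ij}`, determined by
the maps `XM i = X_i : Δ_m(n) → B(n)`. -/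
def monB (k : Type*) [Field k] {m n : ℕ} (XM : Fin m → (Fin m → ℕ) → Finset (Fin n))
    (b : Fin m → ℕ) : MvPolynomial (Fin m × Fin n) k :=
  ∏ i : Fin m, ∏ j ∈ XM i b, MvPolynomial.X (i, j)

/-- The ideal `J` generated by the monomials `m(b)`, `b ∈ Δ_m(n)`. -/
def JofX (k : Type*) [Field k] {m n : ℕ} (XM : Fin m → (Fin m → ℕ) → Finset (Fin n)) :
    Ideal (MvPolynomial (Fin m × Fin n) k) :=
  Ideal.span { p | ∃ b : Fin m → ℕ, (∑ t, b t) = n ∧ p = monB k XM b }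

/-- `J ⊆ k[X̌_1, …, X̌_m]` is a polarization of `(x_1, …, x_m)^n`: `J` is a squarefree monomial
ideal, the map `π : x_{ij} ↦ x_i` carries `J` onto `(x_1, …, x_m)^n`, and the variable
differences `x_{i,j} - x_{i,j+1}` form a regular sequence on the quotient by `J`. -/
def IsPolarizationMaxPow (k : Type*) [Field k] {m n : ℕ}
    (J : Ideal (MvPolynomial (Fin m × Fin n) k)) : Prop :=
  (∃ G : Set ((Fin m × Fin n) →₀ ℕ), (∀ d ∈ G, ∀ x, d x ≤ 1) ∧
    J = Ideal.span ((fun d => monomial d (1 : k)) '' G)) ∧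
  Ideal.map (rename Prod.fst : MvPolynomial (Fin m × Fin n) k →ₐ[k] MvPolynomial (Fin m) k) J
    = Ideal.span (Set.range MvPolynomial.X) ^ n ∧
  IsRegSeq (diffs k m n) J

/-- The edge `(c; i, j)` of `Δ_m(n)` (where `c ∈ Δ_m(n+1)` and `i, j ∈ supp c`) is a
linear syzygy edge: `X_p(c - e_i) = X_p(c - e_j)` for every `p ∈ supp(c) \ {i, j}`. -/
def LSedge {m n : ℕ} (XM : Fin m → (Fin m → ℕ) → Finset (Fin n))
    (c : Fin m → ℕ) (i j : Fin m) : Prop :=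
  ∀ p, 1 ≤ c p → p ≠ i → p ≠ j → XM p (subE c i) = XM p (subE c j)

/-! ### Lifting syzygies and regular sequences -/

/-- Every relation `∑ h_b m_b ≡ 0` modulo the ideal `I` agrees modulo `I` with a genuine relation
`∑ g_b m_b = 0`, that is, syzygies of the family `m` over `A ⧸ I` lift to syzygies over `A`. -/
def SyzLift {A ι : Type*} [CommRing A] [Fintype ι] (m : ι → A) (I : Ideal A) : Prop :=
  ∀ h : ι → A, ∑ b, h b * m b ∈ I → ∃ g : ι → A, ∑ b, g b * m b = 0 ∧ ∀ b, h b - g b ∈ I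

theorem mem_span_range_iff_sum {A ι : Type*} [CommRing A] [Fintype ι] (m : ι → A) (f : A) :
    f ∈ Ideal.span (Set.range m) ↔ ∃ u : ι → A, ∑ b, u b * m b = f := by
  simpa using Ideal.mem_span_range_iff_exists_fun (x := f) (v := m)

/-- Syzygies lift through a regular sequence on `A ⧸ (J + I)`, where `J` is generated by `m`: the
error `a f` of an arbitrary lift through one element `a` has `f ∈ J + I`, so that subtracting
multiples of `a` from the coefficients corrects it. -/
theorem syz_lift_of_isRegSeq {A ι : Type*} [CommRing A] [Fintype ι] (m : ι → A) (l : List A) :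
    ∀ I : Ideal A, IsRegSeq l (Ideal.span (Set.range m) ⊔ I) →
      ∀ h : ι → A, ∑ b, h b * m b ∈ I ⊔ Ideal.span {x | x ∈ l} →
        ∃ g : ι → A, ∑ b, g b * m b ∈ I ∧ ∀ b, h b - g b ∈ I ⊔ Ideal.span {x | x ∈ l} := by
  induction l with
  | nil =>
    intro I _ h hh
    refine ⟨h, by simpa using hh, by simp⟩
  | cons a l ih =>
    intro I hreg h hh
    have hset : I ⊔ Ideal.span {x | x ∈ a :: l} =
        (I ⊔ Ideal.span {a}) ⊔ Ideal.span {x | x ∈ l} := by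
      have : {x | x ∈ a :: l} = {a} ∪ {x | x ∈ l} := by ext; simp
      rw [this, Ideal.span_union, sup_assoc]
    rw [hset] at hh ⊢
    obtain ⟨ha, hl⟩ := hreg
    rw [sup_assoc] at hl
    obtain ⟨g, hg, hgh⟩ := ih _ hl h hh
    obtain ⟨y, hy, z, hz, hyz⟩ := Submodule.mem_sup.1 hg
    obtain ⟨f, rfl⟩ := Ideal.mem_span_singleton'.1 hz
    have hf : f ∈ Ideal.span (Set.range m) ⊔ I := by
      apply ha
      have : a * f = ∑ b, g b * m b - y := by rw [← hyz]; ring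
      rw [this]
      exact sub_mem (Ideal.mem_sup_left ((mem_span_range_iff_sum m _).2 ⟨g, rfl⟩))
        (Ideal.mem_sup_right hy)
    obtain ⟨v, hv, w, hw, hvw⟩ := Submodule.mem_sup.1 hf
    obtain ⟨u, rfl⟩ := (mem_span_range_iff_sum m _).1 hv
    refine ⟨fun b => g b - a * u b, ?_, fun b => ?_⟩
    · have : ∑ b, (g b - a * u b) * m b = y + a * w := by
        have h1 : ∑ b, (g b - a * u b) * m b = ∑ b, g b * m b - a * ∑ b, u b * m b := by
          rw [Finset.mul_sum, ← Finset.sum_sub_distrib]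
          exact Finset.sum_congr rfl fun b _ => by ring
        rw [h1, ← hyz, ← hvw]; ring
      rw [this]
      exact add_mem hy (I.mul_mem_left _ hw)
    · have : h b - (g b - a * u b) = (h b - g b) + u b * a := by ring
      rw [this]
      exact add_mem (hgh b) (Ideal.mem_sup_left (Ideal.mem_sup_right
        (Ideal.mul_mem_left _ _ (Ideal.mem_span_singleton_self a))))

section Graded

variable {A ι : Type*} [CommRing A] [Fintype ι] {R : Type*} [CommRing R] [Algebra R A]
  (𝒜 : ℕ → Submodule R A) [GradedAlgebra 𝒜]

theorem proj_sum_mul {n : ℕ} {m : ι → A} (hm : ∀ b, m b ∈ 𝒜 n) (h : ι → A) (d : ℕ) :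
    GradedRing.proj 𝒜 (d + n) (∑ b, h b * m b) = ∑ b, GradedRing.proj 𝒜 d (h b) * m b := by
  rw [map_sum]
  refine Finset.sum_congr rfl fun b _ => ?_
  simp only [GradedRing.proj_apply]
  exact DirectSum.coe_decompose_mul_add_of_right_mem 𝒜 (hm b)

/-- Homogeneous step of the descent: if syzygies over `A ⧸ (I + (a))` lift and `a` is a
nonzerodivisor of degree one modulo `I`, then syzygies over `A ⧸ I` of degree `d` lift. The error of a lift is
`a` times a syzygy of smaller degree, so induction on the degree applies. -/
theorem syzLift_homogeneous {n : ℕ} {m : ι → A} (hm : ∀ b, m b ∈ 𝒜 n) {I : Ideal A}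
    (hI : I.IsHomogeneous 𝒜) {a : A} (ha : a ∈ 𝒜 1) (hreg : ∀ f, a * f ∈ I → f ∈ I)
    (hlift : SyzLift m (I ⊔ Ideal.span {a})) (d : ℕ) :
    ∀ h : ι → A, (∀ b, h b ∈ 𝒜 d) → ∑ b, h b * m b ∈ I →
      ∃ g : ι → A, ∑ b, g b * m b = 0 ∧ ∀ b, h b - g b ∈ I := by
  have key : ∀ (d : ℕ) (h : ι → A), (∀ b, h b ∈ 𝒜 d) → ∑ b, h b * m b ∈ I →
      ∃ g y τ : ι → A, ∑ b, g b * m b = 0 ∧ (∀ b, y b ∈ I) ∧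
        ∀ b, h b = g b + y b + GradedRing.proj 𝒜 d (a * τ b) := by
    intro d h hd hh
    obtain ⟨g, hg, hgh⟩ := hlift h (Ideal.mem_sup_left hh)
    have hyt : ∀ b, ∃ y τ, y ∈ I ∧ h b = g b + y + a * τ := by
      intro b
      obtain ⟨y, hy, z, hz, hyz⟩ := Submodule.mem_sup.1 (hgh b)
      obtain ⟨f, rfl⟩ := Ideal.mem_span_singleton'.1 hz
      exact ⟨y, f, hy, by linear_combination -hyz⟩
    choose y τ hy hyτ using hyt
    refine ⟨fun b => GradedRing.proj 𝒜 d (g b), fun b => GradedRing.proj 𝒜 d (y b), τ, ?_,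
      fun b => hI d (hy b), fun b => ?_⟩
    · rw [← proj_sum_mul 𝒜 hm, hg, map_zero]
    · rw [← map_add, ← map_add, ← hyτ b, GradedRing.proj_apply,
        DirectSum.decompose_of_mem_same 𝒜 (hd b)]
  induction d with
  | zero =>
    intro h hd hh
    obtain ⟨g, y, τ, hg, hy, heq⟩ := key 0 h hd hh
    refine ⟨g, hg, fun b => ?_⟩
    have : GradedRing.proj 𝒜 0 (a * τ b) = 0 := by
      rw [GradedRing.proj_apply]
      exact DirectSum.coe_decompose_mul_of_left_mem_of_not_le 𝒜 ha (by omega)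
    rw [heq b, this]
    simpa using hy b
  | succ d ih =>
    intro h hd hh
    obtain ⟨g, y, τ, hg, hy, heq⟩ := key (d + 1) h hd hh
    have hτ : ∀ b, h b = g b + y b + a * GradedRing.proj 𝒜 d (τ b) := by
      intro b
      have h1 : GradedRing.proj 𝒜 (d + 1) (a * τ b) = a * GradedRing.proj 𝒜 d (τ b) := by
        simp only [GradedRing.proj_apply]
        rw [add_comm]
        exact DirectSum.coe_decompose_mul_add_of_left_mem 𝒜 ha
      rw [← h1]
      exact heq b
    obtain ⟨g', hg', hgh'⟩ := ih (fun b => GradedRing.proj 𝒜 d (τ b))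
      (fun b => by rw [GradedRing.proj_apply]; exact SetLike.coe_mem _) (by
        apply hreg
        have : a * ∑ b, GradedRing.proj 𝒜 d (τ b) * m b =
            ∑ b, h b * m b - ∑ b, g b * m b - ∑ b, y b * m b := by
          rw [Finset.mul_sum, ← Finset.sum_sub_distrib, ← Finset.sum_sub_distrib]
          exact Finset.sum_congr rfl fun b _ => by rw [hτ b]; ring
        rw [this, hg, sub_zero]
        exact sub_mem hh (sum_mem fun b _ => I.mul_mem_right _ (hy b)))
    refine ⟨fun b => g b + a * g' b, ?_, fun b => ?_⟩
    · have : ∑ b, (g b + a * g' b) * m b = ∑ b, g b * m b + a * ∑ b, g' b * m b := by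
        rw [Finset.mul_sum, ← Finset.sum_add_distrib]
        exact Finset.sum_congr rfl fun b _ => by ring
      rw [this, hg, hg']; ring
    · have : h b - (g b + a * g' b) = y b + a * (GradedRing.proj 𝒜 d (τ b) - g' b) := by
        rw [hτ b]; ring
      rw [this]
      exact add_mem (hy b) (I.mul_mem_left _ (hgh' b))

theorem syzLift_of_sup {n : ℕ} {m : ι → A} (hm : ∀ b, m b ∈ 𝒜 n) {I : Ideal A}
    (hI : I.IsHomogeneous 𝒜) {a : A} (ha : a ∈ 𝒜 1) (hreg : ∀ f, a * f ∈ I → f ∈ I)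
    (hlift : SyzLift m (I ⊔ Ideal.span {a})) : SyzLift m I := by
  classical
  intro h hh
  have hex : ∀ d, ∃ g : ι → A, ∑ b, g b * m b = 0 ∧
      ∀ b, GradedRing.proj 𝒜 d (h b) - g b ∈ I := fun d =>
    syzLift_homogeneous 𝒜 hm hI ha hreg hlift d (fun b => GradedRing.proj 𝒜 d (h b))
      (fun b => by rw [GradedRing.proj_apply]; exact SetLike.coe_mem _)
      (by rw [← proj_sum_mul 𝒜 hm]; exact hI _ hh)
  choose g hg hgh using hex
  -- `D` contains the degrees of all the homogeneous components of the `h b`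
  let D : Finset ℕ := Finset.univ.biUnion fun b => (DirectSum.decompose 𝒜 (h b)).support
  have hD : ∀ b, ∑ d ∈ D, GradedRing.proj 𝒜 d (h b) = h b := by
    intro b
    conv_rhs => rw [← DirectSum.sum_support_decompose 𝒜 (h b)]
    symm
    apply Finset.sum_subset
    · exact Finset.subset_biUnion_of_mem
        (fun b => (DirectSum.decompose 𝒜 (h b)).support) (Finset.mem_univ b)
    · intro d _ hd
      simpa [DFinsupp.mem_support_iff] using hd
  refine ⟨fun b => ∑ d ∈ D, g d b, ?_, fun b => ?_⟩
  · simp only [Finset.sum_mul]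
    rw [Finset.sum_comm]
    exact Finset.sum_eq_zero fun d _ => hg d
  · rw [← hD b, ← Finset.sum_sub_distrib]
    exact sum_mem fun d _ => hgh d b

/-- Converse of `syz_lift_of_isRegSeq` in the graded setting: a sequence of linear forms that is
regular on `A ⧸ I` and through which all syzygies of `m` lift is regular on `A ⧸ (J + I)`, where
`J` is generated by `m`. -/
theorem isRegSeq_of_syzLift {n : ℕ} {m : ι → A} (hm : ∀ b, m b ∈ 𝒜 n) (l : List A)
    (hl : ∀ a ∈ l, a ∈ 𝒜 1) :
    ∀ I : Ideal A, I.IsHomogeneous 𝒜 → IsRegSeq l I →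
      SyzLift m (I ⊔ Ideal.span {x | x ∈ l}) →
        SyzLift m I ∧ IsRegSeq l (Ideal.span (Set.range m) ⊔ I) := by
  induction l with
  | nil =>
    intro I _ _ h
    exact ⟨by simpa using h, trivial⟩
  | cons a l ih =>
    intro I hI hreg hlift
    have hset : I ⊔ Ideal.span {x | x ∈ a :: l} =
        (I ⊔ Ideal.span {a}) ⊔ Ideal.span {x | x ∈ l} := by
      have : {x | x ∈ a :: l} = {a} ∪ {x | x ∈ l} := by ext; simp
      rw [this, Ideal.span_union, sup_assoc]
    rw [hset] at hlift
    obtain ⟨ha, hreg⟩ := hreg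
    have ha1 := hl a (by simp)
    obtain ⟨h1, h2⟩ := ih (fun x hx => hl x (by simp [hx])) (I ⊔ Ideal.span {a})
      (hI.sup (Ideal.homogeneous_span 𝒜 _ (by
        rintro x rfl
        exact ⟨1, ha1⟩))) hreg hlift
    refine ⟨syzLift_of_sup 𝒜 hm hI ha1 ha h1, ?_, by rw [sup_assoc]; exact h2⟩
    intro f hf
    obtain ⟨v, hv, y, hy, hvy⟩ := Submodule.mem_sup.1 hf
    obtain ⟨h, rfl⟩ := (mem_span_range_iff_sum m _).1 hv
    obtain ⟨g, hg, hgh⟩ := h1 h (by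
      have : ∑ b, h b * m b = f * a - y := by linear_combination hvy
      rw [this]
      exact sub_mem (Ideal.mem_sup_right (Ideal.mul_mem_left _ _
        (Ideal.mem_span_singleton_self a))) (Ideal.mem_sup_left hy))
    have hyt : ∀ b, ∃ y τ, y ∈ I ∧ h b = g b + y + a * τ := by
      intro b
      obtain ⟨y, hy, z, hz, hyz⟩ := Submodule.mem_sup.1 (hgh b)
      obtain ⟨f, rfl⟩ := Ideal.mem_span_singleton'.1 hz
      exact ⟨y, f, hy, by linear_combination -hyz⟩
    choose z τ hz hzτ using hyt
    have hsum : ∑ b, h b * m b = ∑ b, z b * m b + a * ∑ b, τ b * m b := by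
      have : ∑ b, h b * m b = ∑ b, g b * m b + (∑ b, z b * m b + a * ∑ b, τ b * m b) := by
        rw [Finset.mul_sum, ← Finset.sum_add_distrib, ← Finset.sum_add_distrib]
        exact Finset.sum_congr rfl fun b _ => by rw [hzτ b]; ring
      rw [this, hg, zero_add]
    have hfin : f - ∑ b, τ b * m b ∈ I := by
      apply ha
      have : a * (f - ∑ b, τ b * m b) = ∑ b, z b * m b + y := by
        linear_combination -hvy + hsum
      rw [this]
      exact add_mem (sum_mem fun b _ => I.mul_mem_right _ (hz b)) hy
    have : f = ∑ b, τ b * m b + (f - ∑ b, τ b * m b) := by ring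
    rw [this]
    exact add_mem (Ideal.mem_sup_left ((mem_span_range_iff_sum m _).2 ⟨τ, rfl⟩))
      (Ideal.mem_sup_right hfin)

end Graded

/-! ### The variable differences -/

theorem sub_rename_mem {σ k : Type*} [Field k] (f : σ → σ) (I : Ideal (MvPolynomial σ k))
    (h : ∀ x, X x - X (f x) ∈ I) (p : MvPolynomial σ k) : p - rename f p ∈ I := by
  have : Ideal.Quotient.mkₐ k I = (Ideal.Quotient.mkₐ k I).comp (rename f) := by
    apply MvPolynomial.algHom_ext
    intro x
    simpa using Ideal.Quotient.eq.2 (h x)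
  exact Ideal.Quotient.eq.1 (DFunLike.congr_fun this p)

/-- Differences of variables along the edges of a forest form a regular sequence on a polynomial
ring. Identifying the endpoints of the edges one after another realizes each intermediate quotient
as the image of `rename f` for an idempotent `f`, a domain. The function `φ q` certifies that the
edge `q` is not closed up by the earlier ones. -/
theorem isRegSeq_sub {σ k : Type*} [Field k] (φ : σ × σ → σ → Prop) (l : List (σ × σ))
    (hne : ∀ q ∈ l, φ q q.1 ≠ φ q q.2)
    (hpw : l.Pairwise fun p q => φ q p.1 = φ q p.2) :
    ∀ f : σ → σ, (∀ x, f (f x) = f x) → (∀ q ∈ l, ∀ x, φ q (f x) = φ q x) →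
      IsRegSeq (l.map fun q => (X q.1 - X q.2 : MvPolynomial σ k))
        (RingHom.ker (rename f : MvPolynomial σ k →ₐ[k] MvPolynomial σ k)) := by
  classical
  induction l with
  | nil => intro f _ _; trivial
  | cons q l ih =>
    intro f hf hφ
    obtain ⟨u, v⟩ := q
    rw [List.pairwise_cons] at hpw
    have huv : f u ≠ f v := by
      intro h
      have h1 := hφ (u, v) (by simp) u
      rw [h, hφ (u, v) (by simp) v] at h1
      exact hne (u, v) (by simp) h1.symm
    refine ⟨fun p hp => ?_, ?_⟩
    · rw [RingHom.mem_ker, map_mul, map_sub, rename_X, rename_X, mul_eq_zero] at hp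
      rw [RingHom.mem_ker]
      refine hp.resolve_left fun h => huv ?_
      exact X_injective (sub_eq_zero.1 h)
    · let f' : σ → σ := fun x => if f x = f u then f v else f x
      have hker : RingHom.ker (rename f : MvPolynomial σ k →ₐ[k] MvPolynomial σ k) ⊔
          Ideal.span {X u - X v} =
          RingHom.ker (rename f' : MvPolynomial σ k →ₐ[k] MvPolynomial σ k) := by
        have hx : ∀ x, (X x - X (f x) : MvPolynomial σ k) ∈
            RingHom.ker (rename f : MvPolynomial σ k →ₐ[k] MvPolynomial σ k) := by
          intro x
          rw [RingHom.mem_ker, map_sub, rename_X, rename_X, hf, sub_self]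
        apply le_antisymm
        · refine sup_le (fun p hp => ?_) ?_
          · have hcomp : f' = (fun y => if y = f u then f v else y) ∘ f := rfl
            rw [RingHom.mem_ker] at hp ⊢
            rw [hcomp, ← rename_rename, hp, map_zero]
          · rw [Ideal.span_singleton_le_iff_mem, RingHom.mem_ker, map_sub, rename_X, rename_X]
            simp [f']
        · intro p hp
          rw [RingHom.mem_ker] at hp
          have := sub_rename_mem (k := k) f' (RingHom.ker
            (rename f : MvPolynomial σ k →ₐ[k] MvPolynomial σ k) ⊔ Ideal.span {X u - X v})
            (fun x => ?_) p
          · rwa [hp, sub_zero] at this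
          · by_cases hxu : f x = f u
            · have h1 : (X x - X (f' x) : MvPolynomial σ k) =
                  (X x - X (f x)) - (X u - X (f u)) + (X v - X (f v)) + (X u - X v) := by
                simp only [f', if_pos hxu]
                rw [hxu]; ring
              rw [h1]
              exact add_mem (Ideal.mem_sup_left (add_mem (sub_mem (hx x) (hx u)) (hx v)))
                (Ideal.mem_sup_right (Ideal.mem_span_singleton_self _))
            · simp only [f', if_neg hxu]
              exact Ideal.mem_sup_left (hx x)
      simp only
      rw [hker]
      refine ih (fun q hq => hne q (by simp [hq])) hpw.2 f' (fun x => ?_) (fun q hq x => ?_)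
      · by_cases hxu : f x = f u
        · simp only [f', if_pos hxu, hf, if_neg huv.symm]
        · simp only [f', if_neg hxu, hf]
      · by_cases hxu : f x = f u
        · simp only [f', if_pos hxu]
          rw [hφ q (by simp [hq]), ← hpw.1 q hq, ← hφ q (by simp [hq]) x, hxu,
            hφ q (by simp [hq])]
        · simp only [f', if_neg hxu]
          exact hφ q (by simp [hq]) x

/-- The index pairs `((i, j), (i, j + 1))` underlying `diffs`. -/
def diffPairs (m n : ℕ) : List ((Fin m × Fin n) × (Fin m × Fin n)) :=
  (List.finRange m).flatMap fun i =>
    (List.finRange (n - 1)).map fun j =>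
      ((i, ⟨j.1, by have := j.isLt; omega⟩), (i, ⟨j.1 + 1, by have := j.isLt; omega⟩))

theorem diffs_eq (k : Type*) [Field k] (m n : ℕ) :
    diffs k m n = (diffPairs m n).map fun q => X q.1 - X q.2 := by
  simp [diffs, diffPairs, List.map_flatMap, Function.comp_def]

theorem isRegSeq_diffs_bot (k : Type*) [Field k] (m n : ℕ) : IsRegSeq (diffs k m n) ⊥ := by
  have hker : (⊥ : Ideal (MvPolynomial (Fin m × Fin n) k)) =
      RingHom.ker (rename id : MvPolynomial (Fin m × Fin n) k →ₐ[k] _) := by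
    ext p
    simp [RingHom.mem_ker]
  rw [diffs_eq, hker]
  -- the cut separating `(i, 1), …, (i, j)` from all the other variables crosses only one edge
  refine isRegSeq_sub (fun q x => x.1 = q.1.1 ∧ x.2 ≤ q.1.2) _ ?_ ?_ id (fun _ => rfl)
    (fun _ _ _ => rfl)
  · intro q hq
    simp only [diffPairs, List.mem_flatMap, List.mem_map, List.mem_finRange, true_and] at hq
    obtain ⟨i, j, rfl⟩ := hq
    simp
  · rw [diffPairs, List.pairwise_flatMap]
    constructor
    · intro i _
      rw [List.pairwise_map]
      refine (List.pairwise_lt_finRange (n - 1)).imp ?_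
      intro j j' hjj
      rw [Fin.lt_def] at hjj
      simp only [true_and, Fin.mk_le_mk, eq_iff_iff]
      omega
    · refine (List.nodup_finRange m).imp ?_
      intro i i' hii p hp q hq
      simp only [List.mem_map, List.mem_finRange, true_and] at hp hq
      obtain ⟨j, rfl⟩ := hp
      obtain ⟨j', rfl⟩ := hq
      simp [hii]

theorem mem_diffs_iff {k : Type*} [Field k] {m n : ℕ} (p : MvPolynomial (Fin m × Fin n) k) :
    p ∈ diffs k m n ↔ ∃ (i : Fin m) (j : ℕ) (hj : j + 1 < n),
      p = X (i, ⟨j, by omega⟩) - X (i, ⟨j + 1, hj⟩) := by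
  simp only [diffs, List.mem_flatMap, List.mem_map, List.mem_finRange, true_and]
  constructor
  · rintro ⟨i, j, rfl⟩
    exact ⟨i, j.1, by have := j.isLt; omega, rfl⟩
  · rintro ⟨i, j, hj, rfl⟩
    exact ⟨i, ⟨j, by omega⟩, rfl⟩

/-- The differences of variables generate the kernel of `π : x_{ij} ↦ x_i`. -/
theorem span_diffs {k : Type*} [Field k] {m n : ℕ} (hn : 0 < n) :
    Ideal.span {x | x ∈ diffs k m n} =
      RingHom.ker (rename Prod.fst : MvPolynomial (Fin m × Fin n) k →ₐ[k] MvPolynomial (Fin m) k) := by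
  apply le_antisymm
  · rw [Ideal.span_le]
    intro p hp
    obtain ⟨i, j, hj, rfl⟩ := (mem_diffs_iff p).1 hp
    simp [RingHom.mem_ker]
  · intro p hp
    rw [RingHom.mem_ker] at hp
    have := sub_rename_mem (k := k) (fun x : Fin m × Fin n => (x.1, (⟨0, hn⟩ : Fin n)))
      (Ideal.span {x | x ∈ diffs k m n}) (fun x => ?_) p
    · have hc : (fun x : Fin m × Fin n => (x.1, (⟨0, hn⟩ : Fin n))) =
        (fun i => (i, ⟨0, hn⟩)) ∘ Prod.fst := rfl
      rwa [hc, ← rename_rename, hp, map_zero, sub_zero] at this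
    · obtain ⟨i, j, hj⟩ := x
      induction j with
      | zero => simp
      | succ j ih =>
        have h1 := ih (by omega)
        have h2 : (X (i, ⟨j, by omega⟩) - X (i, ⟨j + 1, hj⟩) : MvPolynomial (Fin m × Fin n) k) ∈
            Ideal.span {x | x ∈ diffs k m n} :=
          Ideal.subset_span ((mem_diffs_iff _).2 ⟨i, j, hj, rfl⟩)
        have h3 := sub_mem h1 h2
        rwa [show ∀ a b c : MvPolynomial (Fin m × Fin n) k, a - b - (a - c) = c - b by
          intros; ring] at h3

/-! ### Exponents of the generators -/

/-- The index set `Δ_m(n)`. -/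
abbrev Idx (m n : ℕ) : Type := {b : Fin m → ℕ // ∑ t, b t = n}

instance instFiniteIdx (m n : ℕ) : Finite (Idx m n) := by
  refine Finite.of_injective
    (fun b : Idx m n => fun t => (⟨b.1 t, ?_⟩ : Fin (n + 1))) fun a b h => ?_
  · have h1 := Finset.single_le_sum (f := b.1) (fun i _ => Nat.zero_le _) (Finset.mem_univ t)
    have h2 := b.2
    omega
  · ext t
    exact congrArg Fin.val (congrFun h t)

instance instFintypeIdx (m n : ℕ) : Fintype (Idx m n) := Fintype.ofFinite _

/-- The exponent vector of the squarefree monomial `m(b)`. -/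
def expo {m n : ℕ} (XM : Fin m → (Fin m → ℕ) → Finset (Fin n)) (b : Fin m → ℕ) :
    (Fin m × Fin n) →₀ ℕ :=
  Finsupp.equivFunOnFinite.symm fun x => if x.2 ∈ XM x.1 b then 1 else 0

theorem expo_apply {m n : ℕ} (XM : Fin m → (Fin m → ℕ) → Finset (Fin n)) (b : Fin m → ℕ)
    (x : Fin m × Fin n) : expo XM b x = if x.2 ∈ XM x.1 b then 1 else 0 := rfl

theorem monB_eq (k : Type*) [Field k] {m n : ℕ} (XM : Fin m → (Fin m → ℕ) → Finset (Fin n))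
    (b : Fin m → ℕ) : monB k XM b = monomial (expo XM b) 1 := by
  rw [monomial_eq, C_1, one_mul, Finsupp.prod_fintype _ _ (by simp), Fintype.prod_prod_type, monB]
  refine Finset.prod_congr rfl fun i _ => ?_
  simp [expo_apply, pow_ite, Finset.prod_ite_mem]

theorem mapDomain_fst_apply_s4 {m n : ℕ} (w : (Fin m × Fin n) →₀ ℕ) (i : Fin m) :
    Finsupp.mapDomain Prod.fst w i = ∑ j, w (i, j) := by
  induction w using Finsupp.induction_linear with
  | zero => simp
  | add f g hf hg => simp [Finsupp.mapDomain_add, hf, hg, Finset.sum_add_distrib]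
  | single x a =>
    obtain ⟨p, q⟩ := x
    rw [Finsupp.mapDomain_single]
    by_cases h : p = i
    · subst h
      simp [Finsupp.single_apply]
    · simp [h]

theorem mapDomain_expo {m n : ℕ} {XM : Fin m → (Fin m → ℕ) → Finset (Fin n)}
    (hrank : ∀ i b, (∑ t, b t) = n → (XM i b).card = b i) {b : Fin m → ℕ} (hb : ∑ t, b t = n) :
    Finsupp.mapDomain Prod.fst (expo XM b) = Finsupp.equivFunOnFinite.symm b := by
  ext i
  rw [mapDomain_fst_apply_s4]
  simp [expo_apply, hrank i b hb]

theorem rename_monB (k : Type*) [Field k] {m n : ℕ} {XM : Fin m → (Fin m → ℕ) → Finset (Fin n)}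
    (hrank : ∀ i b, (∑ t, b t) = n → (XM i b).card = b i) {b : Fin m → ℕ} (hb : ∑ t, b t = n) :
    rename Prod.fst (monB k XM b) = monomial (Finsupp.equivFunOnFinite.symm b) (1 : k) := by
  rw [monB_eq, rename_monomial, mapDomain_expo hrank hb]

theorem monB_mem_homogeneous (k : Type*) [Field k] {m n : ℕ}
    {XM : Fin m → (Fin m → ℕ) → Finset (Fin n)}
    (hrank : ∀ i b, (∑ t, b t) = n → (XM i b).card = b i) {b : Fin m → ℕ} (hb : ∑ t, b t = n) :
    monB k XM b ∈ homogeneousSubmodule (Fin m × Fin n) k n := by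
  rw [monB_eq, mem_homogeneousSubmodule]
  apply isHomogeneous_monomial
  rw [Finsupp.degree_eq_sum, Fintype.sum_prod_type]
  refine (Finset.sum_congr rfl fun i _ => ?_).trans hb
  simp [expo_apply, hrank i b hb]

theorem JofX_eq (k : Type*) [Field k] {m n : ℕ} (XM : Fin m → (Fin m → ℕ) → Finset (Fin n)) :
    JofX k XM = Ideal.span (Set.range fun b : Idx m n => monB k XM b.1) := by
  unfold JofX
  congr 1
  ext p
  simp only [Set.mem_ofPred_eq, Set.mem_range, Subtype.exists]
  constructor
  · rintro ⟨b, hb, rfl⟩; exact ⟨b, hb, rfl⟩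
  · rintro ⟨b, hb, rfl⟩; exact ⟨b, hb, rfl⟩

theorem JofX_squarefree (k : Type*) [Field k] {m n : ℕ}
    (XM : Fin m → (Fin m → ℕ) → Finset (Fin n)) :
    ∃ G : Set ((Fin m × Fin n) →₀ ℕ), (∀ d ∈ G, ∀ x, d x ≤ 1) ∧
      JofX k XM = Ideal.span ((fun d => monomial d (1 : k)) '' G) := by
  refine ⟨Set.range fun b : Idx m n => expo XM b.1, ?_, ?_⟩
  · rintro _ ⟨b, rfl⟩ x
    simp only [expo_apply]
    split_ifs <;> simp
  · rw [JofX_eq, ← Set.range_comp]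
    simp only [monB_eq, Function.comp_def]

theorem map_JofX (k : Type*) [Field k] {m n : ℕ} {XM : Fin m → (Fin m → ℕ) → Finset (Fin n)}
    (hrank : ∀ i b, (∑ t, b t) = n → (XM i b).card = b i) :
    Ideal.map (rename Prod.fst : MvPolynomial (Fin m × Fin n) k →ₐ[k] MvPolynomial (Fin m) k)
      (JofX k XM) = Ideal.span (Set.range MvPolynomial.X) ^ n := by
  rw [JofX_eq, Ideal.map_span, ← Set.range_comp]
  have := pow_idealOfVars_eq_span (σ := Fin m) (R := k) n
  rw [this]
  congr 1
  ext p
  simp only [Set.mem_range, Set.mem_image, Function.comp_apply, Set.mem_preimage]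
  constructor
  · rintro ⟨b, rfl⟩
    refine ⟨Finsupp.equivFunOnFinite.symm b.1, ?_, ?_⟩
    · simpa [Finsupp.degree_eq_sum] using b.2
    · exact (rename_monB k hrank b.2).symm
  · rintro ⟨d, hd, rfl⟩
    have hd' : ∑ t, d t = n := by simpa [Finsupp.degree_eq_sum] using hd
    refine ⟨⟨d, hd'⟩, ?_⟩
    refine (rename_monB k hrank hd').trans ?_
    simp

theorem sum_addE {m : ℕ} (b : Fin m → ℕ) (i : Fin m) : ∑ t, addE b i t = ∑ t, b t + 1 := by
  simp [addE, Finset.sum_add_distrib]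

theorem addE_subE {m : ℕ} {c : Fin m → ℕ} {i : Fin m} (hi : 1 ≤ c i) : addE (subE c i) i = c := by
  ext t
  by_cases h : t = i
  · subst h; simp [addE, subE]; omega
  · simp [addE, subE, h]

theorem sum_subE {m n : ℕ} {c : Fin m → ℕ} (hc : ∑ t, c t = n + 1) {i : Fin m} (hi : 1 ≤ c i) :
    ∑ t, subE c i t = n := by
  have := sum_addE (subE c i) i
  rw [addE_subE hi, hc] at this
  omega

theorem subE_apply_self {m : ℕ} (c : Fin m → ℕ) (i : Fin m) : subE c i i = c i - 1 := by
  simp [subE]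

theorem subE_apply_ne {m : ℕ} (c : Fin m → ℕ) {i t : Fin m} (h : t ≠ i) : subE c i t = c t := by
  simp [subE, h]

theorem symm_subE {m : ℕ} {c : Fin m → ℕ} {i : Fin m} (hi : 1 ≤ c i) :
    Finsupp.single i 1 + Finsupp.equivFunOnFinite.symm (subE c i) =
      Finsupp.equivFunOnFinite.symm c := by
  ext t
  have := congrFun (addE_subE hi) t
  simp only [addE] at this
  simp [Finsupp.single_apply, ← this, add_comm, eq_comm]

theorem exists_eq_single {σ : Type*} [Fintype σ] (w : σ →₀ ℕ) (h : ∑ x, w x = 1) :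
    ∃ x, w = Finsupp.single x 1 := by
  classical
  obtain ⟨x, _, hx⟩ : ∃ x ∈ Finset.univ, w x ≠ 0 := by
    by_contra! hcon
    rw [Finset.sum_eq_zero hcon] at h
    omega
  refine ⟨x, ?_⟩
  rw [← Finset.add_sum_erase _ _ (Finset.mem_univ x)] at h
  have h0 : ∑ y ∈ Finset.univ.erase x, w y = 0 := by omega
  rw [Finset.sum_eq_zero_iff] at h0
  ext y
  by_cases hy : y = x
  · subst hy; simp; omega
  · simp [h0 y (by simp [hy]), Ne.symm hy]

/-! ### From liftable syzygies to connected down-graphs -/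

/-- When `R` is closed under linear syzygy edges, a multiple `x^w m(b)` is one of the monomials
`x_{rα} m(c - e_r)`, `r ∈ R`, exactly if `b = c - e_s` and `π(x^w) = x_s` for some `s ∈ R`. In
particular this depends on `w` only through its image under `π`. -/
theorem add_expo_mem_iff {m n : ℕ} {XM : Fin m → (Fin m → ℕ) → Finset (Fin n)}
    (hrank : ∀ i b, (∑ t, b t) = n → (XM i b).card = b i)
    {c : Fin m → ℕ} (hc : ∑ t, c t = n + 1) {R : Set (Fin m)} (hR : ∀ r ∈ R, 1 ≤ c r)
    (hcl : ∀ r ∈ R, ∀ s, 1 ≤ c s → LSedge XM c r s → s ∈ R)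
    {b : Fin m → ℕ} (hb : ∑ t, b t = n) (w : (Fin m × Fin n) →₀ ℕ) :
    (∃ r ∈ R, ∃ α, w + expo XM b = Finsupp.single (r, α) 1 + expo XM (subE c r)) ↔
      ∃ s ∈ R, b = subE c s ∧ Finsupp.mapDomain Prod.fst w = Finsupp.single s 1 := by
  constructor
  · rintro ⟨r, hr, α, h⟩
    have hD : Finsupp.mapDomain Prod.fst w + Finsupp.equivFunOnFinite.symm b =
        Finsupp.equivFunOnFinite.symm c := by
      have := congrArg (Finsupp.mapDomain Prod.fst) h
      rw [Finsupp.mapDomain_add, Finsupp.mapDomain_add, Finsupp.mapDomain_single,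
        mapDomain_expo hrank hb, mapDomain_expo hrank (sum_subE hc (hR r hr)),
        symm_subE (hR r hr)] at this
      exact this
    have hDt : ∀ t, Finsupp.mapDomain Prod.fst w t + b t = c t := fun t => by
      simpa using DFunLike.congr_fun hD t
    obtain ⟨s, hs⟩ := exists_eq_single (Finsupp.mapDomain Prod.fst w) (by
      have : ∑ t, (Finsupp.mapDomain Prod.fst w t + b t) = n + 1 := by
        rw [← hc]; exact Finset.sum_congr rfl fun t _ => hDt t
      rw [Finset.sum_add_distrib, hb] at this
      omega)
    have hbs : b = subE c s := by
      ext t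
      have := hDt t
      rw [hs] at this
      by_cases hts : t = s
      · subst hts; simp at this; simp [subE]; omega
      · simp [Ne.symm hts] at this; simp [subE, hts, this]
    have hcs : 1 ≤ c s := by
      have := hDt s
      rw [hs] at this
      simp at this
      omega
    refine ⟨s, hcl r hr s hcs ?_, hbs, hs⟩
    intro p _ hpr hps
    have hw : ∀ j, w (p, j) = 0 := by
      have : Finsupp.mapDomain Prod.fst w p = 0 := by
        rw [hs]; simp [Ne.symm hps]
      rw [mapDomain_fst_apply_s4, Finset.sum_eq_zero_iff] at this
      exact fun j => this j (Finset.mem_univ j)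
    ext j
    have := DFunLike.congr_fun h (p, j)
    rw [Finsupp.add_apply, Finsupp.add_apply, hw j, Finsupp.single_eq_of_ne (by simp [hpr]),
      zero_add, zero_add, expo_apply, expo_apply, hbs] at this
    simp only at this
    by_cases h1 : j ∈ XM p (subE c s) <;> by_cases h2 : j ∈ XM p (subE c r) <;> simp_all
  · rintro ⟨s, hs, rfl, hw⟩
    obtain ⟨⟨p, α⟩, rfl⟩ := exists_eq_single w (by
      rw [Fintype.sum_prod_type]
      simp only [← mapDomain_fst_apply_s4, hw]
      simp [Finsupp.single_apply])
    rw [Finsupp.mapDomain_single] at hw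
    have : p = s := Finsupp.single_left_injective one_ne_zero hw
    subst this
    exact ⟨p, hs, α, rfl⟩

/-- If `j` were not reachable from `i`, the functional summing the coefficients of the monomials
`x_{rα} m(c - e_r)`, `r` reachable from `i`, would take the value `1` on the relation
`x_i e_{c - e_i} - x_j e_{c - e_j}`, but vanish on every lift of it to a syzygy. -/
theorem connected_of_syzLift {k : Type*} [Field k] {m n : ℕ} (hn : 0 < n)
    {XM : Fin m → (Fin m → ℕ) → Finset (Fin n)}
    (hrank : ∀ i b, (∑ t, b t) = n → (XM i b).card = b i)
    (hlift : SyzLift (fun b : Idx m n => monB k XM b.1)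
      (RingHom.ker (rename Prod.fst :
        MvPolynomial (Fin m × Fin n) k →ₐ[k] MvPolynomial (Fin m) k)))
    {c : Fin m → ℕ} (hc : ∑ t, c t = n + 1) {i j : Fin m} (hi : 1 ≤ c i) (hj : 1 ≤ c j) :
    Relation.ReflTransGen (fun r s => 1 ≤ c r ∧ 1 ≤ c s ∧ LSedge XM c r s) i j := by
  classical
  let R : Set (Fin m) :=
    {s | 1 ≤ c s ∧ Relation.ReflTransGen (fun r s => 1 ≤ c r ∧ 1 ≤ c s ∧ LSedge XM c r s) i s}
  have hR : ∀ r ∈ R, 1 ≤ c r := fun r hr => hr.1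
  have hcl : ∀ r ∈ R, ∀ s, 1 ≤ c s → LSedge XM c r s → s ∈ R :=
    fun r hr s hs hrs => ⟨hs, hr.2.tail ⟨hr.1, hs, hrs⟩⟩
  have hiR : i ∈ R := ⟨hi, .refl⟩
  by_contra hcon
  have hjR : j ∉ R := fun h => hcon h.2
  let ψ : MvPolynomial (Fin m × Fin n) k →ₗ[k] k :=
    (basisMonomials (Fin m × Fin n) k).constr k fun M =>
      if ∃ r ∈ R, ∃ α, M = Finsupp.single (r, α) 1 + expo XM (subE c r) then 1 else 0
  have hψ : ∀ M, ψ (monomial M 1) =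
      if ∃ r ∈ R, ∃ α, M = Finsupp.single (r, α) 1 + expo XM (subE c r) then 1 else 0 := by
    intro M
    have := (basisMonomials (Fin m × Fin n) k).constr_basis k (fun M =>
      if ∃ r ∈ R, ∃ α, M = Finsupp.single (r, α) 1 + expo XM (subE c r) then (1 : k) else 0) M
    rwa [coe_basisMonomials] at this
  -- `q ↦ ψ (q m(b))` factors through `π`
  have hfac : ∀ b : Idx m n, ∃ θ : MvPolynomial (Fin m) k →ₗ[k] k,
      ∀ q, ψ (q * monB k XM b.1) = θ (rename Prod.fst q) := by
    intro b
    let θ : MvPolynomial (Fin m) k →ₗ[k] k := (basisMonomials (Fin m) k).constr k fun v =>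
      if ∃ s ∈ R, b.1 = subE c s ∧ v = Finsupp.single s 1 then 1 else 0
    have hθ : ∀ v, θ (monomial v 1) =
        if ∃ s ∈ R, b.1 = subE c s ∧ v = Finsupp.single s 1 then 1 else 0 := by
      intro v
      have := (basisMonomials (Fin m) k).constr_basis k (fun v =>
        if ∃ s ∈ R, b.1 = subE c s ∧ v = Finsupp.single s 1 then (1 : k) else 0) v
      rwa [coe_basisMonomials] at this
    refine ⟨θ, fun q => ?_⟩
    have : ψ.comp (LinearMap.mulRight k (monB k XM b.1)) =
        θ.comp (rename Prod.fst : MvPolynomial (Fin m × Fin n) k →ₐ[k] _).toLinearMap := by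
      apply (basisMonomials (Fin m × Fin n) k).ext
      intro w
      rw [coe_basisMonomials]
      simp only [LinearMap.comp_apply, LinearMap.mulRight_apply, AlgHom.toLinearMap_apply,
        rename_monomial, hθ, monB_eq, monomial_mul, one_mul, hψ]
      simp only [add_expo_mem_iff hrank hc hR hcl b.2 w]
    exact DFunLike.congr_fun this q
  let bi : Idx m n := ⟨subE c i, sum_subE hc hi⟩
  let bj : Idx m n := ⟨subE c j, sum_subE hc hj⟩
  let α : Fin n := ⟨0, hn⟩
  let h : Idx m n → MvPolynomial (Fin m × Fin n) k :=
    Pi.single bi (X (i, α)) - Pi.single bj (X (j, α))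
  have hsum : ∑ b, h b * monB k XM b.1 =
      X (i, α) * monB k XM (subE c i) - X (j, α) * monB k XM (subE c j) := by
    simp only [h, Pi.sub_apply, sub_mul, Finset.sum_sub_distrib]
    simp [Pi.single_apply, ite_mul, bi, bj]
  obtain ⟨g, hg, hgh⟩ := hlift h (by
    rw [hsum, RingHom.mem_ker, map_sub, map_mul, map_mul, rename_X, rename_X,
      rename_monB k hrank (sum_subE hc hi), rename_monB k hrank (sum_subE hc hj), X, X,
      monomial_mul, monomial_mul, symm_subE hi, symm_subE hj, sub_self])
  have h0 : ψ (∑ b, h b * monB k XM b.1) = 0 := by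
    have h1 : ψ (∑ b, h b * monB k XM b.1) = ψ (∑ b, g b * monB k XM b.1) := by
      rw [map_sum, map_sum]
      refine Finset.sum_congr rfl fun b _ => ?_
      obtain ⟨θ, hθ⟩ := hfac b
      have h2 := hgh b
      rw [RingHom.mem_ker, map_sub, sub_eq_zero] at h2
      rw [hθ, hθ, h2]
    rw [h1, hg, map_zero]
  rw [hsum, map_sub, monB_eq, monB_eq, X, X, monomial_mul, monomial_mul, one_mul, hψ, hψ,
    if_pos ⟨i, hiR, α, rfl⟩, if_neg, sub_zero] at h0
  · exact one_ne_zero h0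
  · rw [add_expo_mem_iff hrank hc hR hcl (sum_subE hc hj)]
    rintro ⟨s, hs, _, hw⟩
    rw [Finsupp.mapDomain_single] at hw
    have : j = s := Finsupp.single_left_injective one_ne_zero hw
    exact hjR (this ▸ hs)

/-! ### From connected down-graphs to liftable syzygies -/

/-- The submodule of those relations among the `x^b`, `b ∈ Δ_m(n)`, over `k[x_1, …, x_m]` that lift
to relations among the `m(b)`. -/
def liftable (k : Type*) [Field k] {m n : ℕ} (hn : 0 < n)
    (XM : Fin m → (Fin m → ℕ) → Finset (Fin n)) :
    Submodule (MvPolynomial (Fin m) k) (Idx m n → MvPolynomial (Fin m) k) where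
  carrier := {u | ∃ g : Idx m n → MvPolynomial (Fin m × Fin n) k,
    ∑ b, g b * monB k XM b.1 = 0 ∧ ∀ b, rename Prod.fst (g b) = u b}
  zero_mem' := ⟨0, by simp, by simp⟩
  add_mem' := by
    rintro u v ⟨g, hg, hgu⟩ ⟨g', hg', hgv⟩
    refine ⟨g + g', ?_, fun b => by simp [hgu, hgv]⟩
    simp [add_mul, Finset.sum_add_distrib, hg, hg']
  smul_mem' := by
    rintro t u ⟨g, hg, hgu⟩
    have : Function.Surjective (Prod.fst : Fin m × Fin n → Fin m) := fun i => ⟨(i, ⟨0, hn⟩), rfl⟩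
    obtain ⟨t', rfl⟩ := rename_surjective (R := k) _ this t
    refine ⟨fun b => t' * g b, ?_, fun b => by simp [hgu]⟩
    simp only [mul_assoc, ← Finset.mul_sum, hg, mul_zero]

/-- The element `p · e_b` of the free module on `Δ_m(n)`. -/
abbrev eTerm {A : Type*} [CommRing A] {m n : ℕ} (b : Idx m n) (p : A) : Idx m n → A := Pi.single b p

section Liftable

variable {k : Type*} [Field k] {m n : ℕ} {XM : Fin m → (Fin m → ℕ) → Finset (Fin n)}

theorem exists_insert
    (hrank : ∀ i b, (∑ t, b t) = n → (XM i b).card = b i)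
    (hiso : ∀ (i : Fin m) (a b : Fin m → ℕ), (∑ t, a t) = n → (∑ t, b t) = n →
      a i ≤ b i → (∀ j, j ≠ i → b j ≤ a j) → XM i a ⊆ XM i b)
    {c : Fin m → ℕ} (hc : ∑ t, c t = n + 1) {i j : Fin m} (hij : i ≠ j)
    (hi : 1 ≤ c i) (hj : 1 ≤ c j) :
    ∃ α ∉ XM i (subE c i), XM i (subE c j) = insert α (XM i (subE c i)) := by
  have hsub : XM i (subE c i) ⊆ XM i (subE c j) := by
    refine hiso i _ _ (sum_subE hc hi) (sum_subE hc hj) ?_ fun t ht => ?_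
    · rw [subE_apply_self, subE_apply_ne c hij]; omega
    · rw [subE_apply_ne c ht]; simp [subE]
  have hcard : (XM i (subE c j) \ XM i (subE c i)).card = 1 := by
    rw [Finset.card_sdiff_of_subset hsub, hrank i _ (sum_subE hc hi),
      hrank i _ (sum_subE hc hj), subE_apply_self, subE_apply_ne c hij]
    omega
  obtain ⟨α, hα⟩ := Finset.card_eq_one.1 hcard
  refine ⟨α, ?_, ?_⟩
  · have : α ∈ XM i (subE c j) \ XM i (subE c i) := by rw [hα]; simp
    exact (Finset.mem_sdiff.1 this).2
  · rw [← Finset.sdiff_union_of_subset hsub, hα]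
    rfl

/-- A linear syzygy edge yields a linear syzygy `x_{iα} m(c - e_i) = x_{jβ} m(c - e_j)`. -/
theorem liftable_of_LSedge (hn : 0 < n)
    (hrank : ∀ i b, (∑ t, b t) = n → (XM i b).card = b i)
    (hiso : ∀ (i : Fin m) (a b : Fin m → ℕ), (∑ t, a t) = n → (∑ t, b t) = n →
      a i ≤ b i → (∀ j, j ≠ i → b j ≤ a j) → XM i a ⊆ XM i b)
    {c : Fin m → ℕ} (hc : ∑ t, c t = n + 1) {i j : Fin m}
    (hi : 1 ≤ c i) (hj : 1 ≤ c j) (hLS : LSedge XM c i j) :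
    (eTerm ⟨subE c i, sum_subE hc hi⟩ (X i) - eTerm ⟨subE c j, sum_subE hc hj⟩ (X j) :
      Idx m n → MvPolynomial (Fin m) k) ∈ liftable k hn XM := by
  classical
  by_cases hij : i = j
  · subst hij
    rw [sub_self]
    exact zero_mem _
  obtain ⟨α, hα, hαeq⟩ := exists_insert hrank hiso hc hij hi hj
  obtain ⟨β, hβ, hβeq⟩ := exists_insert hrank hiso hc (Ne.symm hij) hj hi
  refine ⟨eTerm ⟨subE c i, sum_subE hc hi⟩ (X (i, α)) -
    eTerm ⟨subE c j, sum_subE hc hj⟩ (X (j, β)), ?_, fun b => ?_⟩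
  · have hexp : Finsupp.single (i, α) 1 + expo XM (subE c i) =
        Finsupp.single (j, β) 1 + expo XM (subE c j) := by
      ext ⟨p, q⟩
      rw [Finsupp.add_apply, Finsupp.add_apply, expo_apply, expo_apply]
      simp only
      by_cases hpi : p = i
      · subst hpi
        rw [hαeq, Finsupp.single_eq_of_ne (a := (j, β)) (by simp [hij])]
        by_cases hq : q = α
        · subst hq; simp [hα]
        · rw [Finsupp.single_eq_of_ne (by simp [hq])]; simp [hq]
      · by_cases hpj : p = j
        · subst hpj
          rw [hβeq, Finsupp.single_eq_of_ne (a := (i, α)) (by simp [hpi])]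
          by_cases hq : q = β
          · subst hq; simp [hβ]
          · rw [Finsupp.single_eq_of_ne (by simp [hq])]; simp [hq]
        · rw [Finsupp.single_eq_of_ne (by simp [hpi]), Finsupp.single_eq_of_ne (by simp [hpj])]
          have hXM : XM p (subE c i) = XM p (subE c j) := by
            by_cases hcp : 1 ≤ c p
            · exact hLS p hcp hpi hpj
            · -- outside the support of `c` both sets are empty
              have h1 := hrank p _ (sum_subE hc hi)
              have h2 := hrank p _ (sum_subE hc hj)
              rw [subE_apply_ne c hpi, show c p = 0 by omega, Finset.card_eq_zero] at h1
              rw [subE_apply_ne c hpj, show c p = 0 by omega, Finset.card_eq_zero] at h2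
              rw [h1, h2]
          rw [hXM]
    simp only [Pi.sub_apply, sub_mul, Finset.sum_sub_distrib]
    simp only [Pi.single_apply, ite_mul, zero_mul, Finset.sum_ite_eq', Finset.mem_univ, if_true]
    rw [monB_eq, monB_eq, X, X, monomial_mul, monomial_mul, hexp, sub_self]
  · simp only [Pi.sub_apply, map_sub, Pi.single_apply]
    congr 1 <;> split_ifs <;> simp

theorem liftable_of_reachable (hn : 0 < n)
    (hrank : ∀ i b, (∑ t, b t) = n → (XM i b).card = b i)
    (hiso : ∀ (i : Fin m) (a b : Fin m → ℕ), (∑ t, a t) = n → (∑ t, b t) = n →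
      a i ≤ b i → (∀ j, j ≠ i → b j ≤ a j) → XM i a ⊆ XM i b)
    {c : Fin m → ℕ} (hc : ∑ t, c t = n + 1) {i j : Fin m}
    (hi : 1 ≤ c i) (hj : 1 ≤ c j)
    (hconn : Relation.ReflTransGen (fun r s => 1 ≤ c r ∧ 1 ≤ c s ∧ LSedge XM c r s) i j) :
    (eTerm ⟨subE c i, sum_subE hc hi⟩ (X i) - eTerm ⟨subE c j, sum_subE hc hj⟩ (X j) :
      Idx m n → MvPolynomial (Fin m) k) ∈ liftable k hn XM := by
  induction hconn with
  | refl => rw [sub_self]; exact zero_mem _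
  | tail _ h ih =>
    have h1 := add_mem (ih h.1) (liftable_of_LSedge (k := k) hn hrank hiso hc h.1 h.2.1 h.2.2)
    rwa [sub_add_sub_cancel] at h1

/-- Any two terms `x^d / x^b · e_b` and `x^d / x^{b'} · e_{b'}` of the same multidegree `d` agree
modulo liftable relations: `b` is moved towards `b'` one unit at a time along edges `(c; j, i)`. -/
theorem liftable_monomial (hn : 0 < n)
    (hrank : ∀ i b, (∑ t, b t) = n → (XM i b).card = b i)
    (hiso : ∀ (i : Fin m) (a b : Fin m → ℕ), (∑ t, a t) = n → (∑ t, b t) = n →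
      a i ≤ b i → (∀ j, j ≠ i → b j ≤ a j) → XM i a ⊆ XM i b)
    (hconn : ∀ c : Fin m → ℕ, (∑ t, c t) = n + 1 → ∀ i j, 1 ≤ c i → 1 ≤ c j →
      Relation.ReflTransGen (fun r s => 1 ≤ c r ∧ 1 ≤ c s ∧ LSedge XM c r s) i j) (N : ℕ) :
    ∀ (a b a' b' : Fin m →₀ ℕ) (hb : ∑ t, b t = n) (hb' : ∑ t, b' t = n), a + b = a' + b' →
      ∑ t, (b t - b' t) = N →
      (eTerm ⟨b, hb⟩ (monomial a 1) - eTerm ⟨b', hb'⟩ (monomial a' 1) :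
        Idx m n → MvPolynomial (Fin m) k) ∈ liftable k hn XM := by
  classical
  induction N with
  | zero =>
    intro a b a' b' hb hb' hab hN
    have hle : ∀ t, b t ≤ b' t := by
      intro t
      have := Finset.sum_eq_zero_iff.1 hN t (Finset.mem_univ t)
      omega
    have heq : b = b' := by
      ext t
      exact (Finset.sum_eq_sum_iff_of_le fun t _ => hle t).1 (hb.trans hb'.symm) t
        (Finset.mem_univ t)
    subst heq
    have : a = a' := add_right_cancel hab
    subst this
    rw [sub_self]
    exact zero_mem _
  | succ N ih =>
    intro a b a' b' hb hb' hab hN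
    obtain ⟨i, hi⟩ : ∃ i, b' i < b i := by
      by_contra! hcon
      rw [Finset.sum_eq_zero fun t _ => Nat.sub_eq_zero_of_le (hcon t)] at hN
      omega
    obtain ⟨j, hj⟩ : ∃ j, b j < b' j := by
      by_contra! hcon
      have := (Finset.sum_eq_sum_iff_of_le fun t _ => hcon t).1 (hb'.trans hb.symm) i
        (Finset.mem_univ i)
      omega
    have hij : i ≠ j := by rintro rfl; omega
    have habt : ∀ t, a t + b t = a' t + b' t := fun t => DFunLike.congr_fun hab t
    let c : Fin m → ℕ := addE b j
    have hc : ∑ t, c t = n + 1 := by rw [sum_addE, hb]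
    have hcj : 1 ≤ c j := by simp [c, addE]
    have hci : 1 ≤ c i := by simp [c, addE, hij]; omega
    have hsj : subE c j = b := by
      ext t
      simp [c, addE, subE]
    -- `x_j e_b - x_i e_{b''}` is liftable, where `b'' = b + e_j - e_i`
    have h1 := liftable_of_reachable (k := k) hn hrank hiso hc hcj hci (hconn c hc j i hcj hci)
    let a₀ : Fin m →₀ ℕ := a - Finsupp.single j 1
    have ha₀ : a₀ + Finsupp.single j 1 = a := by
      ext t
      by_cases ht : t = j
      · subst ht; have := habt t; simp [a₀]; omega
      · simp [a₀, Ne.symm ht]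
    have h2 := (liftable k hn XM).smul_mem (monomial a₀ 1) h1
    let b'' : Fin m →₀ ℕ := Finsupp.equivFunOnFinite.symm (subE c i)
    have hb'' : ∑ t, b'' t = n := sum_subE hc hci
    have hb''t : ∀ t, b'' t + (if t = i then 1 else 0) = b t + (if t = j then 1 else 0) :=
      fun t => congrFun (addE_subE hci) t
    have h3 := ih (a₀ + Finsupp.single i 1) b'' a' b' hb'' hb' ?_ ?_
    · have h4 := add_mem h2 h3
      have e1 : (⟨subE c j, sum_subE hc hcj⟩ : Idx m n) = ⟨b, hb⟩ := Subtype.ext hsj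
      have e2 : (⟨subE c i, sum_subE hc hci⟩ : Idx m n) = ⟨b'', hb''⟩ := rfl
      rw [e1, e2, smul_sub, ← Pi.single_smul', ← Pi.single_smul', smul_eq_mul, smul_eq_mul, X, X,
        monomial_mul, monomial_mul, one_mul, ha₀, sub_add_sub_cancel] at h4
      exact h4
    · ext t
      have e1 := hb''t t
      have e2 := habt t
      have e3 : a₀ t + (Finsupp.single j 1 : Fin m →₀ ℕ) t = a t := DFunLike.congr_fun ha₀ t
      simp only [Finsupp.add_apply, Finsupp.single_apply, eq_comm (b := t)] at e3 ⊢
      omega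
    · have h5 : ∑ t, ((b'' t - b' t) + if t = i then 1 else 0) = ∑ t, (b t - b' t) := by
        refine Finset.sum_congr rfl fun t _ => ?_
        have e1 := hb''t t
        by_cases hti : t = i
        · subst hti
          simp only [if_true, if_neg hij] at e1 ⊢
          omega
        · by_cases htj : t = j
          · subst htj
            simp only [if_true, if_neg hti] at e1 ⊢
            omega
          · simp only [if_neg hti, if_neg htj] at e1 ⊢
            omega
      rw [Finset.sum_add_distrib, hN] at h5
      simp at h5
      exact h5

/-- If all down-graphs are connected by linear syzygy edges, syzygies of the `x^b` lift: choosing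
one term `x^d / x^b · e_b` for each monomial `x^d` rewrites any `u`, modulo liftable relations, in
terms of the value `∑ u_b x^b` alone. -/
theorem syzLift_of_connected (hn : 0 < n)
    (hrank : ∀ i b, (∑ t, b t) = n → (XM i b).card = b i)
    (hiso : ∀ (i : Fin m) (a b : Fin m → ℕ), (∑ t, a t) = n → (∑ t, b t) = n →
      a i ≤ b i → (∀ j, j ≠ i → b j ≤ a j) → XM i a ⊆ XM i b)
    (hconn : ∀ c : Fin m → ℕ, (∑ t, c t) = n + 1 → ∀ i j, 1 ≤ c i → 1 ≤ c j →
      Relation.ReflTransGen (fun r s => 1 ≤ c r ∧ 1 ≤ c s ∧ LSedge XM c r s) i j) :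
    SyzLift (fun b : Idx m n => monB k XM b.1)
      (RingHom.ker (rename Prod.fst :
        MvPolynomial (Fin m × Fin n) k →ₐ[k] MvPolynomial (Fin m) k)) := by
  classical
  let S : (Fin m →₀ ℕ) → (Fin m →₀ ℕ) × Idx m n → Prop := fun d x =>
    x.1 + Finsupp.equivFunOnFinite.symm x.2.1 = d
  let rep : (Fin m →₀ ℕ) → Idx m n → MvPolynomial (Fin m) k := fun d =>
    if h : ∃ x, S d x then Pi.single h.choose.2 (monomial h.choose.1 1) else 0
  let Φ : MvPolynomial (Fin m) k →ₗ[k] (Idx m n → MvPolynomial (Fin m) k) :=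
    (basisMonomials (Fin m) k).constr k rep
  have hΦ : ∀ d, Φ (monomial d 1) = rep d := by
    intro d
    have := (basisMonomials (Fin m) k).constr_basis k rep d
    rwa [coe_basisMonomials] at this
  have hterm : ∀ (b : Idx m n) (p : MvPolynomial (Fin m) k),
      Pi.single b p - Φ (p * monomial (Finsupp.equivFunOnFinite.symm b.1) 1) ∈
        liftable k hn XM := by
    intro b p
    induction p using MvPolynomial.induction_on' with
    | monomial a r =>
      have hr : (monomial a r : MvPolynomial (Fin m) k) = r • monomial a 1 := by
        rw [smul_monomial, smul_eq_mul, mul_one]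
      rw [hr, Pi.single_smul', smul_mul_assoc, map_smul, ← smul_sub, ← algebraMap_smul
        (MvPolynomial (Fin m) k) r]
      apply Submodule.smul_mem
      rw [monomial_mul, one_mul, hΦ]
      have hex : ∃ x, S (a + Finsupp.equivFunOnFinite.symm b.1) x := ⟨(a, b), rfl⟩
      simp only [rep, dif_pos hex]
      exact liftable_monomial hn hrank hiso hconn _ a (Finsupp.equivFunOnFinite.symm b.1)
        hex.choose.1 (Finsupp.equivFunOnFinite.symm hex.choose.2.1) b.2 hex.choose.2.2
        hex.choose_spec.symm rfl
    | add p q hp hq =>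
      rw [Pi.single_add, add_mul, map_add, add_sub_add_comm]
      exact add_mem hp hq
  intro h hh
  rw [RingHom.mem_ker, map_sum] at hh
  have hmem : (fun b => rename Prod.fst (h b)) ∈ liftable k hn XM := by
    have h1 : ∑ b : Idx m n, (Pi.single b (rename Prod.fst (h b)) -
        Φ (rename Prod.fst (h b) * monomial (Finsupp.equivFunOnFinite.symm b.1) 1)) ∈
        liftable k hn XM := sum_mem fun b _ => hterm b _
    rw [Finset.sum_sub_distrib, ← map_sum] at h1
    have h2 : ∑ b : Idx m n, (rename Prod.fst (h b) *
        monomial (Finsupp.equivFunOnFinite.symm b.1) (1 : k)) = 0 := by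
      rw [← hh]
      refine Finset.sum_congr rfl fun b _ => ?_
      rw [map_mul, rename_monB k hrank b.2]
    rw [h2, map_zero, sub_zero, Finset.univ_sum_single] at h1
    exact h1
  obtain ⟨g, hg, hgu⟩ := hmem
  refine ⟨g, hg, fun b => ?_⟩
  rw [RingHom.mem_ker, map_sub, hgu, sub_self]

end Liftable

theorem diffs_mem_homogeneous {k : Type*} [Field k] {m n : ℕ}
    (a : MvPolynomial (Fin m × Fin n) k) (ha : a ∈ diffs k m n) :
    a ∈ homogeneousSubmodule (Fin m × Fin n) k 1 := by
  obtain ⟨i, j, hj, rfl⟩ := (mem_diffs_iff a).1 ha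
  exact sub_mem (isHomogeneous_X k _) (isHomogeneous_X k _)

/-- **Main theorem.** The rank-preserving isotone maps `X_1, …, X_m` determine a
polarization of `(x_1, …, x_m)^n` if and only if for every `c ∈ Δ_m(n+1)` the linear syzygy
edges of the down-graph `D(c)` contain a spanning tree of `D(c)`, i.e. the subgraph of the
complete graph on `{c - e_i : i ∈ supp c}` consisting of linear syzygy edges is connected. -/
theorem stmt_4 {k : Type*} [Field k] (m n : ℕ)
    (XM : Fin m → (Fin m → ℕ) → Finset (Fin n))
    (hrank : ∀ i b, (∑ t, b t) = n → (XM i b).card = b i)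
    (hiso : ∀ (i : Fin m) (a b : Fin m → ℕ), (∑ t, a t) = n → (∑ t, b t) = n →
      a i ≤ b i → (∀ j, j ≠ i → b j ≤ a j) → XM i a ⊆ XM i b) :
    IsPolarizationMaxPow k (JofX k XM) ↔
      ∀ c : Fin m → ℕ, (∑ t, c t) = n + 1 →
        ∀ i j, 1 ≤ c i → 1 ≤ c j →
          Relation.ReflTransGen (fun r s => 1 ≤ c r ∧ 1 ≤ c s ∧ LSedge XM c r s) i j := by
  have hmap := map_JofX k hrank
  have hsq := JofX_squarefree k XM
  rcases Nat.eq_zero_or_pos n with rfl | hn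
  · -- for `n = 0` there are no differences, and every down-graph has a single vertex
    refine ⟨fun _ c hc i j hi hj => ?_, fun _ => ⟨hsq, hmap, ?_⟩⟩
    · have hij : i = j := by
        by_contra hij
        have := Finset.add_le_sum (f := c) (fun _ _ => Nat.zero_le _) (Finset.mem_univ i)
          (Finset.mem_univ j) hij
        omega
      rw [hij]
    · have : diffs k m 0 = [] := by simp [diffs]
      rw [this]
      trivial
  constructor
  · rintro ⟨-, -, hreg⟩ c hc i j hi hj
    refine connected_of_syzLift (k := k) hn hrank ?_ hc hi hj
    rw [JofX_eq, ← sup_bot_eq (Ideal.span _)] at hreg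
    intro h hh
    have := syz_lift_of_isRegSeq _ _ ⊥ hreg h (by rwa [bot_sup_eq, span_diffs hn])
    simpa [span_diffs hn] using this
  · intro hconn
    refine ⟨hsq, hmap, ?_⟩
    let _ : GradedAlgebra (homogeneousSubmodule (Fin m × Fin n) k) := MvPolynomial.gradedAlgebra
    have := (isRegSeq_of_syzLift (homogeneousSubmodule (Fin m × Fin n) k)
      (fun b : Idx m n => monB_mem_homogeneous k hrank b.2) (diffs k m n) diffs_mem_homogeneous ⊥
      (Ideal.IsHomogeneous.bot _) (isRegSeq_diffs_bot k m n) (by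
        rw [bot_sup_eq, span_diffs hn]
        exact syzLift_of_connected hn hrank hiso hconn)).2
    rwa [sup_bot_eq, ← JofX_eq] at this
end
end
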